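/- arXiv:1311.3725 — 4 statements merged into one kernel-verified Lean document; each statement's English description precedes it below -/
import Mathlib

section
/- Let H, L ∈ ℕ with L ≥ 1, and let A ≥ 0. For each h ∈ {1, …, H} let T_h : L²(ℝ) × L²(ℝ) × L²(ℝ) → ℂ be a trilinear map, and let I_h, Y_h ⊆ ℝ be measurable sets, such that: (i) |T_h(g₁,g₂,g₃)| ≤ A ‖g₁‖_{L²} ‖g₂‖_{L²} ‖g₃‖_{L²} for all g₁, g₂, g₃ ∈ L²(ℝ); (ii) T_h(g₁,g₂,g₃) = T_h(g₁·𝟙_{I_h}, g₂·𝟙_{Y_h}, g₃) for all g₁, g₂, g₃ ∈ L²(ℝ); (iii) I_h ∩ I_{h'} = ∅ and Y_h ∩ Y_{h'} = ∅ whenever h ≡ h' (mod L) and h ≠ h'. Then for all f₁, f₂, f₃ ∈ L²(ℝ): |Σ_{h=1}^{H} T_h(f₁,f₂,f₃)| ≤ L · A · ‖f₁‖_{L²} ‖f₂‖_{L²} ‖f₃‖_{L²}. -/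
open MeasureTheory

noncomputable section

lemma aux_sq (f : ℝ → ℂ) : (eLpNorm f 2 (volume : Measure ℝ)) ^ 2 = ∫⁻ x, ‖f x‖ₑ ^ 2 := by
  have h := eLpNorm_nnreal_pow_eq_lintegral (f := f) (μ := (volume : Measure ℝ)) (p := 2) two_ne_zero
  simpa using h

lemma aux_sum (S : Finset ℕ) (E : ℕ → Set ℝ) (hE : ∀ h, MeasurableSet (E h))
    (hd : ∀ h ∈ S, ∀ h' ∈ S, h ≠ h' → E h ∩ E h' = ∅) (f : ℝ → ℂ)
    (hf : MemLp f 2 (volume : Measure ℝ)) :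
    ∑ h ∈ S, (eLpNorm ((E h).indicator f) 2 (volume : Measure ℝ)).toReal ^ 2 ≤
      (eLpNorm f 2 (volume : Measure ℝ)).toReal ^ 2 := by
  have key : ∑ h ∈ S, (eLpNorm ((E h).indicator f) 2 (volume : Measure ℝ)) ^ 2 ≤
      (eLpNorm f 2 (volume : Measure ℝ)) ^ 2 := by
    simp only [aux_sq]
    have h1 : ∀ h ∈ S, ∫⁻ x, ‖(E h).indicator f x‖ₑ ^ 2 = ∫⁻ x in E h, ‖f x‖ₑ ^ 2 := by
      intro h _
      rw [← lintegral_indicator (hE h)]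
      congr 1
      ext x
      by_cases hx : x ∈ E h <;> simp [hx]
    rw [Finset.sum_congr rfl h1, ← lintegral_biUnion_finset (t := E)]
    · exact setLIntegral_le_lintegral _ _
    · intro a ha b hb hab
      exact Set.disjoint_iff_inter_eq_empty.2 (hd a ha b hb hab)
    · exact fun b _ => hE b
  have h2 := ENNReal.toReal_mono (ENNReal.pow_ne_top hf.eLpNorm_ne_top) key
  rw [ENNReal.toReal_sum] at h2
  · simpa using h2
  · intro a _
    exact ENNReal.pow_ne_top (hf.indicator (hE a)).eLpNorm_ne_top

/-- Almost-orthogonality principle for a family of trilinear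
forms whose first and second arguments localize to sets that are pairwise
disjoint within each congruence class modulo `L`. -/
theorem almost_orthogonality_trilinear
    (H L : ℕ) (hL : 1 ≤ L) (A : ℝ) (hA : 0 ≤ A)
    (T : ℕ → (ℝ → ℂ) → (ℝ → ℂ) → (ℝ → ℂ) → ℂ)
    (I Y : ℕ → Set ℝ)
    (hImeas : ∀ h, MeasurableSet (I h)) (hYmeas : ∀ h, MeasurableSet (Y h))
    -- `T h` is linear in each of its three arguments
    (hlin₁ : ∀ h ∈ Finset.Icc 1 H, ∀ (c : ℂ) (g₁ g₁' g₂ g₃ : ℝ → ℂ),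
      T h (c • g₁ + g₁') g₂ g₃ = c * T h g₁ g₂ g₃ + T h g₁' g₂ g₃)
    (hlin₂ : ∀ h ∈ Finset.Icc 1 H, ∀ (c : ℂ) (g₁ g₂ g₂' g₃ : ℝ → ℂ),
      T h g₁ (c • g₂ + g₂') g₃ = c * T h g₁ g₂ g₃ + T h g₁ g₂' g₃)
    (hlin₃ : ∀ h ∈ Finset.Icc 1 H, ∀ (c : ℂ) (g₁ g₂ g₃ g₃' : ℝ → ℂ),
      T h g₁ g₂ (c • g₃ + g₃') = c * T h g₁ g₂ g₃ + T h g₁ g₂ g₃')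
    -- (i) uniform bound
    (hbound : ∀ h ∈ Finset.Icc 1 H, ∀ g₁ g₂ g₃ : ℝ → ℂ,
      MemLp g₁ 2 (volume : Measure ℝ) → MemLp g₂ 2 (volume : Measure ℝ) →
      MemLp g₃ 2 (volume : Measure ℝ) →
      ‖T h g₁ g₂ g₃‖ ≤ A * (eLpNorm g₁ 2 (volume : Measure ℝ)).toReal *
        (eLpNorm g₂ 2 (volume : Measure ℝ)).toReal *
        (eLpNorm g₃ 2 (volume : Measure ℝ)).toReal)
    -- (ii) localization
    (hloc : ∀ h ∈ Finset.Icc 1 H, ∀ g₁ g₂ g₃ : ℝ → ℂ,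
      T h g₁ g₂ g₃ = T h ((I h).indicator g₁) ((Y h).indicator g₂) g₃)
    -- (iii) disjointness within congruence classes mod `L`
    (hdisj : ∀ h ∈ Finset.Icc 1 H, ∀ h' ∈ Finset.Icc 1 H, h ≠ h' → h % L = h' % L →
      I h ∩ I h' = ∅ ∧ Y h ∩ Y h' = ∅)
    (f₁ f₂ f₃ : ℝ → ℂ)
    (hf₁ : MemLp f₁ 2 (volume : Measure ℝ)) (hf₂ : MemLp f₂ 2 (volume : Measure ℝ))
    (hf₃ : MemLp f₃ 2 (volume : Measure ℝ)) :
    ‖∑ h ∈ Finset.Icc 1 H, T h f₁ f₂ f₃‖ ≤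
      (L : ℝ) * A * (eLpNorm f₁ 2 (volume : Measure ℝ)).toReal *
        (eLpNorm f₂ 2 (volume : Measure ℝ)).toReal *
        (eLpNorm f₃ 2 (volume : Measure ℝ)).toReal := by
  set n₁ := (eLpNorm f₁ 2 (volume : Measure ℝ)).toReal with hn₁
  set n₂ := (eLpNorm f₂ 2 (volume : Measure ℝ)).toReal with hn₂
  set n₃ := (eLpNorm f₃ 2 (volume : Measure ℝ)).toReal with hn₃
  have p₁ : 0 ≤ n₁ := ENNReal.toReal_nonneg
  have p₂ : 0 ≤ n₂ := ENNReal.toReal_nonneg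
  have p₃ : 0 ≤ n₃ := ENNReal.toReal_nonneg
  have hmaps : ∀ h ∈ Finset.Icc 1 H, h % L ∈ Finset.range L := fun h _ =>
    Finset.mem_range.2 (Nat.mod_lt _ hL)
  rw [← Finset.sum_fiberwise_of_maps_to hmaps]
  have hclass : ∀ r ∈ Finset.range L,
      ‖∑ h ∈ Finset.Icc 1 H with h % L = r, T h f₁ f₂ f₃‖ ≤ A * n₁ * n₂ * n₃ := by
    intro r _
    set S := (Finset.Icc 1 H).filter (fun h => h % L = r) with hS
    have hSd : ∀ h ∈ S, ∀ h' ∈ S, h ≠ h' → I h ∩ I h' = ∅ ∧ Y h ∩ Y h' = ∅ := by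
      intro h hh h' hh' hne
      rw [hS, Finset.mem_filter] at hh hh'
      exact hdisj h hh.1 h' hh'.1 hne (hh.2.trans hh'.2.symm)
    have s₁ := aux_sum S I hImeas (fun h hh h' hh' hne => (hSd h hh h' hh' hne).1) f₁ hf₁
    have s₂ := aux_sum S Y hYmeas (fun h hh h' hh' hne => (hSd h hh h' hh' hne).2) f₂ hf₂
    set a : ℕ → ℝ := fun h => (eLpNorm ((I h).indicator f₁) 2 (volume : Measure ℝ)).toReal
    set b : ℕ → ℝ := fun h => (eLpNorm ((Y h).indicator f₂) 2 (volume : Measure ℝ)).toReal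
    have hcs : ∑ h ∈ S, a h * b h ≤ n₁ * n₂ := by
      refine abs_le_of_sq_le_sq' ?_ (mul_nonneg p₁ p₂) |>.2
      calc (∑ h ∈ S, a h * b h) ^ 2 ≤ (∑ h ∈ S, a h ^ 2) * ∑ h ∈ S, b h ^ 2 :=
            Finset.sum_mul_sq_le_sq_mul_sq S a b
        _ ≤ n₁ ^ 2 * n₂ ^ 2 :=
            mul_le_mul s₁ s₂ (Finset.sum_nonneg fun _ _ => sq_nonneg _) (sq_nonneg _)
        _ = (n₁ * n₂) ^ 2 := by ring
    calc ‖∑ h ∈ S, T h f₁ f₂ f₃‖ ≤ ∑ h ∈ S, ‖T h f₁ f₂ f₃‖ := norm_sum_le _ _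
      _ ≤ ∑ h ∈ S, A * n₃ * (a h * b h) := by
          refine Finset.sum_le_sum fun h hh => ?_
          have hh' := (Finset.mem_filter.1 hh).1
          rw [hloc h hh']
          refine (hbound h hh' _ _ _ (hf₁.indicator (hImeas h)) (hf₂.indicator (hYmeas h))
            hf₃).trans (le_of_eq ?_)
          simp only [a, b, ← hn₃]
          ring
      _ = A * n₃ * ∑ h ∈ S, a h * b h := by rw [Finset.mul_sum]
      _ ≤ A * n₃ * (n₁ * n₂) := mul_le_mul_of_nonneg_left hcs (mul_nonneg hA p₃)
      _ = A * n₁ * n₂ * n₃ := by ring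
  refine (norm_sum_le_of_le _ hclass).trans (le_of_eq ?_)
  rw [Finset.sum_const, Finset.card_range, nsmul_eq_mul]
  ring
end
end

section
/- Let P : ℝ² → ℝ be real analytic in a neighborhood of the origin, not identically zero near the origin, and let c_{p,q} := ∂_x^p ∂_y^q P(0,0)/(p! q!) denote its Taylor coefficients. Let m be a positive rational number, set e := min{ p + m q : (p,q) ∈ ℕ², c_{p,q} ≠ 0 }, let E := { (p,q) ∈ ℕ² : c_{p,q} ≠ 0 and p + m q = e }, let (p_l, q_l) be the element of E with largest q, and define P_E(x,y) := Σ_{(p,q) ∈ E} c_{p,q} x^p y^q. Let 0 < b < B be such that Σ_{(p,q) ∈ E} c_{p,q} r^q ≠ 0 for every r ∈ [b, B]. Then for every N, L ∈ ℕ there exist ε > 0 and constants 0 < c ≤ C such that for all (x,y) with 0 < x < ε and b x^m ≤ y ≤ B x^m: (i) c x^{p_l} y^{q_l} ≤ |P_E(x,y)| ≤ C x^{p_l} y^{q_l}; (ii) |P(x,y) − P_E(x,y)| ≤ 2^{−N} |P_E(x,y)|; (iii) |∂_x^α ∂_y^β P(x,y)| ≤ C · min{ 1, x^{p_l − α} y^{q_l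 − β} } for all integers 0 ≤ α, β ≤ L (here x^{p_l − α} and y^{q_l − β} are real powers of the positive numbers x, y, so negative exponents are allowed). -/
open MeasureTheory

noncomputable section

/-- Partial derivative in the first variable. -/
def pdx (f : ℝ × ℝ → ℝ) : ℝ × ℝ → ℝ := fun p => deriv (fun t => f (t, p.2)) p.1

/-- Partial derivative in the second variable. -/
def pdy (f : ℝ × ℝ → ℝ) : ℝ × ℝ → ℝ := fun p => deriv (fun t => f (p.1, t)) p.2

/-- Taylor coefficient `c_{p,q} = ∂ₓ^p ∂_y^q P(0,0) / (p! q!)`. -/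
def taylorCoef (P : ℝ × ℝ → ℝ) (p q : ℕ) : ℝ :=
  (pdx^[p] (pdy^[q] P)) (0, 0) / ((Nat.factorial p : ℝ) * (Nat.factorial q : ℝ))

open Filter Topology Asymptotics

lemma ED_pdx_eq {f : ℝ × ℝ → ℝ} {z : ℝ × ℝ} (h : DifferentiableAt ℝ f z) :
    pdx f z = fderiv ℝ f z (1, 0) := by
  have h1 : HasDerivAt (fun t : ℝ => ((t, z.2) : ℝ × ℝ)) (1, 0) z.1 :=
    (hasDerivAt_id z.1).prodMk (hasDerivAt_const z.1 z.2)
  exact (h.hasFDerivAt.comp_hasDerivAt z.1 h1).deriv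

lemma ED_pdy_eq {f : ℝ × ℝ → ℝ} {z : ℝ × ℝ} (h : DifferentiableAt ℝ f z) :
    pdy f z = fderiv ℝ f z (0, 1) := by
  have h1 : HasDerivAt (fun t : ℝ => ((z.1, t) : ℝ × ℝ)) (0, 1) z.2 :=
    (hasDerivAt_const z.2 z.1).prodMk (hasDerivAt_id z.2)
  exact (h.hasFDerivAt.comp_hasDerivAt z.2 h1).deriv

lemma ED_diff {f : ℝ × ℝ → ℝ} {a : ℝ × ℝ} (h : AnalyticAt ℝ f a) :
    ∀ᶠ z in 𝓝 a, DifferentiableAt ℝ f z :=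
  h.eventually_analyticAt.mono fun _ hz => hz.differentiableAt

lemma ED_pdx_ev {f : ℝ × ℝ → ℝ} {a : ℝ × ℝ} (h : AnalyticAt ℝ f a) :
    pdx f =ᶠ[𝓝 a] fun z => fderiv ℝ f z (1, 0) :=
  (ED_diff h).mono fun _ hz => ED_pdx_eq hz

lemma ED_pdy_ev {f : ℝ × ℝ → ℝ} {a : ℝ × ℝ} (h : AnalyticAt ℝ f a) :
    pdy f =ᶠ[𝓝 a] fun z => fderiv ℝ f z (0, 1) :=
  (ED_diff h).mono fun _ hz => ED_pdy_eq hz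

lemma ED_fan {f : ℝ × ℝ → ℝ} {a : ℝ × ℝ} (v : ℝ × ℝ) (h : AnalyticAt ℝ f a) :
    AnalyticAt ℝ (fun z => fderiv ℝ f z v) a :=
  ((ContinuousLinearMap.apply ℝ ℝ v).analyticAt _).comp h.fderiv

lemma ED_pdx_an {f : ℝ × ℝ → ℝ} {a : ℝ × ℝ} (h : AnalyticAt ℝ f a) :
    AnalyticAt ℝ (pdx f) a := (ED_fan _ h).congr (ED_pdx_ev h).symm

lemma ED_pdy_an {f : ℝ × ℝ → ℝ} {a : ℝ × ℝ} (h : AnalyticAt ℝ f a) :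
    AnalyticAt ℝ (pdy f) a := (ED_fan _ h).congr (ED_pdy_ev h).symm

lemma ED_pdx_congr {f g : ℝ × ℝ → ℝ} {a : ℝ × ℝ} (h : f =ᶠ[𝓝 a] g) :
    pdx f =ᶠ[𝓝 a] pdx g := by
  filter_upwards [eventually_eventually_nhds.2 h] with z hz
  have ht : Tendsto (fun t : ℝ => ((t, z.2) : ℝ × ℝ)) (𝓝 z.1) (𝓝 z) :=
    Continuous.tendsto (by fun_prop) z.1
  exact EventuallyEq.deriv_eq (ht.eventually hz)

lemma ED_pdy_congr {f g : ℝ × ℝ → ℝ} {a : ℝ × ℝ} (h : f =ᶠ[𝓝 a] g) :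
    pdy f =ᶠ[𝓝 a] pdy g := by
  filter_upwards [eventually_eventually_nhds.2 h] with z hz
  have ht : Tendsto (fun t : ℝ => ((z.1, t) : ℝ × ℝ)) (𝓝 z.2) (𝓝 z) :=
    Continuous.tendsto (by fun_prop) z.2
  exact EventuallyEq.deriv_eq (ht.eventually hz)

lemma ED_fan2 {f : ℝ × ℝ → ℝ} {a : ℝ × ℝ} (v w : ℝ × ℝ) (h : AnalyticAt ℝ f a) :
    fderiv ℝ (fun z => fderiv ℝ f z v) a w = fderiv ℝ (fderiv ℝ f) a w v := by
  have := ((ContinuousLinearMap.apply ℝ ℝ v).hasFDerivAt).comp a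
    h.fderiv.differentiableAt.hasFDerivAt
  have h2 : HasFDerivAt (fun z => fderiv ℝ f z v) _ a := this
  rw [h2.fderiv]; rfl

lemma ED_comm_pt {f : ℝ × ℝ → ℝ} {a : ℝ × ℝ} (h : AnalyticAt ℝ f a) :
    pdx (pdy f) a = pdy (pdx f) a := by
  rw [ED_pdx_eq (ED_pdy_an h).differentiableAt, ED_pdy_eq (ED_pdx_an h).differentiableAt,
    (ED_pdy_ev h).fderiv_eq, (ED_pdx_ev h).fderiv_eq, ED_fan2 _ _ h, ED_fan2 _ _ h]
  exact (h.contDiffAt (n := 2)).isSymmSndFDerivAt (by simp) _ _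

lemma ED_comm {f : ℝ × ℝ → ℝ} {a : ℝ × ℝ} (h : AnalyticAt ℝ f a) :
    pdx (pdy f) =ᶠ[𝓝 a] pdy (pdx f) :=
  h.eventually_analyticAt.mono fun _ hz => ED_comm_pt hz

lemma ED_pdxn_an {f : ℝ × ℝ → ℝ} {a : ℝ × ℝ} (h : AnalyticAt ℝ f a) (n : ℕ) :
    AnalyticAt ℝ (pdx^[n] f) a := by
  induction n with
  | zero => exact h
  | succ n ih => rw [Function.iterate_succ_apply']; exact ED_pdx_an ih

lemma ED_pdyn_an {f : ℝ × ℝ → ℝ} {a : ℝ × ℝ} (h : AnalyticAt ℝ f a) (n : ℕ) :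
    AnalyticAt ℝ (pdy^[n] f) a := by
  induction n with
  | zero => exact h
  | succ n ih => rw [Function.iterate_succ_apply']; exact ED_pdy_an ih

lemma ED_pdxn_congr {f g : ℝ × ℝ → ℝ} {a : ℝ × ℝ} (h : f =ᶠ[𝓝 a] g) (n : ℕ) :
    pdx^[n] f =ᶠ[𝓝 a] pdx^[n] g := by
  induction n with
  | zero => exact h
  | succ n ih => rw [Function.iterate_succ_apply', Function.iterate_succ_apply']; exact ED_pdx_congr ih

lemma ED_pdyn_congr {f g : ℝ × ℝ → ℝ} {a : ℝ × ℝ} (h : f =ᶠ[𝓝 a] g) (n : ℕ) :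
    pdy^[n] f =ᶠ[𝓝 a] pdy^[n] g := by
  induction n with
  | zero => exact h
  | succ n ih => rw [Function.iterate_succ_apply', Function.iterate_succ_apply']; exact ED_pdy_congr ih

lemma ED_commn {f : ℝ × ℝ → ℝ} {a : ℝ × ℝ} (h : AnalyticAt ℝ f a) (n : ℕ) :
    pdy^[n] (pdx f) =ᶠ[𝓝 a] pdx (pdy^[n] f) := by
  induction n with
  | zero => rfl
  | succ n ih =>
    rw [Function.iterate_succ_apply', Function.iterate_succ_apply']
    exact (ED_pdy_congr ih).trans (ED_comm (ED_pdyn_an h n)).symm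

/-- all derivatives of order less than `K` vanish at the origin -/
def EDvan (K : ℕ) (R : ℝ × ℝ → ℝ) : Prop :=
  ∀ p q : ℕ, p + q < K → (pdx^[p] (pdy^[q] R)) (0, 0) = 0

lemma EDvan_x {K : ℕ} {R : ℝ × ℝ → ℝ} (hR : AnalyticAt ℝ R (0, 0)) (h : EDvan (K + 1) R) :
    EDvan K (pdx R) := by
  intro p q hpq
  rw [(ED_pdxn_congr (ED_commn hR q) p).eq_of_nhds, ← Function.iterate_succ_apply]
  exact h _ _ (by omega)

lemma EDvan_y {K : ℕ} {R : ℝ × ℝ → ℝ} (h : EDvan (K + 1) R) :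
    EDvan K (pdy R) := by
  intro p q hpq
  rw [← Function.iterate_succ_apply]
  exact h _ _ (by omega)

lemma EDvan_xn {n K : ℕ} {R : ℝ × ℝ → ℝ} (hR : AnalyticAt ℝ R (0, 0)) (h : EDvan (K + n) R) :
    EDvan K (pdx^[n] R) := by
  induction n generalizing K with
  | zero => exact h
  | succ n ih =>
    rw [Function.iterate_succ_apply']
    exact EDvan_x (ED_pdxn_an hR n) (ih (by rwa [add_assoc, add_comm 1 n]))

lemma EDvan_yn {n K : ℕ} {R : ℝ × ℝ → ℝ} (h : EDvan (K + n) R) :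
    EDvan K (pdy^[n] R) := by
  induction n generalizing K with
  | zero => exact h
  | succ n ih =>
    rw [Function.iterate_succ_apply']
    exact EDvan_y (ih (by rwa [add_assoc, add_comm 1 n]))

lemma EDvan_O {K : ℕ} {R : ℝ × ℝ → ℝ} (hR : AnalyticAt ℝ R (0, 0)) (h : EDvan K R) :
    R =O[𝓝 (0, 0)] fun z => ‖z‖ ^ K := by
  induction K generalizing R with
  | zero =>
    simpa using hR.continuousAt.tendsto.isBigO_one ℝ
  | succ K ih =>
    obtain ⟨C1, h1⟩ := (ih (ED_pdx_an hR) (EDvan_x hR h)).bound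
    obtain ⟨C2, h2⟩ := (ih (ED_pdy_an hR) (EDvan_y h)).bound
    have h0 : R (0, 0) = 0 := h 0 0 (by omega)
    obtain ⟨δ, hδ, hb⟩ := Metric.eventually_nhds_iff_ball.1 (h1.and (h2.and (ED_diff hR)))
    refine IsBigO.of_bound (|C1| + |C2|) ?_
    filter_upwards [Metric.ball_mem_nhds _ hδ] with z hz
    have hz' : ‖z‖ < δ := by
      have := hz; rw [show ((0:ℝ), (0:ℝ)) = 0 from rfl] at this; simpa using this
    have hsub : ∀ w ∈ Metric.closedBall (0 : ℝ × ℝ) ‖z‖, w ∈ Metric.ball ((0:ℝ), (0:ℝ)) δ := by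
      intro w hw
      rw [show ((0:ℝ), (0:ℝ)) = 0 from rfl]
      simp at hw ⊢; linarith
    have key := (convex_closedBall (0 : ℝ × ℝ) ‖z‖).norm_image_sub_le_of_norm_fderiv_le
      (𝕜 := ℝ) (f := R) (C := (|C1| + |C2|) * ‖z‖ ^ K) (x := 0) (y := z)
      (fun w hw => (hb w (hsub w hw)).2.2) ?_ (by simp) (by simp)
    · rw [show R 0 = 0 from h0] at key
      simpa [pow_succ, mul_assoc] using key
    · intro w hw
      obtain ⟨a1, a2, a3⟩ := hb w (hsub w hw)
      rw [ED_pdx_eq a3] at a1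
      rw [ED_pdy_eq a3] at a2
      have hw' : ‖w‖ ≤ ‖z‖ := by simpa using hw
      have hwK : ‖w‖ ^ K ≤ ‖z‖ ^ K := by gcongr
      have b1 : ‖fderiv ℝ R w (1, 0)‖ ≤ |C1| * ‖z‖ ^ K := by
        refine a1.trans ?_
        rw [norm_pow, norm_norm]
        exact mul_le_mul (le_abs_self _) hwK (by positivity) (abs_nonneg _)
      have b2 : ‖fderiv ℝ R w (0, 1)‖ ≤ |C2| * ‖z‖ ^ K := by
        refine a2.trans ?_
        rw [norm_pow, norm_norm]
        exact mul_le_mul (le_abs_self _) hwK (by positivity) (abs_nonneg _)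
      refine ContinuousLinearMap.opNorm_le_bound _ (by positivity) fun v => ?_
      have hv : v = v.1 • ((1:ℝ), (0:ℝ)) + v.2 • ((0:ℝ), (1:ℝ)) := by ext <;> simp
      have e1 : fderiv ℝ R w v = v.1 • fderiv ℝ R w (1, 0) + v.2 • fderiv ℝ R w (0, 1) := by
        conv_lhs => rw [hv]
        rw [map_add, map_smul, map_smul]
      rw [e1]
      refine (norm_add_le _ _).trans ?_
      rw [norm_smul, norm_smul]
      have n1 : ‖v.1‖ ≤ ‖v‖ := norm_fst_le v
      have n2 : ‖v.2‖ ≤ ‖v‖ := norm_snd_le v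
      have := mul_le_mul n1 b1 (norm_nonneg _) (norm_nonneg _)
      have := mul_le_mul n2 b2 (norm_nonneg _) (norm_nonneg _)
      linarith

/-- linearity -/
lemma ED_lin {f g : ℝ × ℝ → ℝ} {a : ℝ × ℝ} (hf : AnalyticAt ℝ f a) (hg : AnalyticAt ℝ g a) :
    pdx (f + g) =ᶠ[𝓝 a] pdx f + pdx g ∧ pdy (f + g) =ᶠ[𝓝 a] pdy f + pdy g := by
  constructor
  · filter_upwards [ED_diff hf, ED_diff hg] with z h1 h2
    rw [Pi.add_apply, ED_pdx_eq (h1.add h2), ED_pdx_eq h1, ED_pdx_eq h2, fderiv_add h1 h2]; rfl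
  · filter_upwards [ED_diff hf, ED_diff hg] with z h1 h2
    rw [Pi.add_apply, ED_pdy_eq (h1.add h2), ED_pdy_eq h1, ED_pdy_eq h2, fderiv_add h1 h2]; rfl

lemma ED_linx {f g : ℝ × ℝ → ℝ} {a : ℝ × ℝ} (hf : AnalyticAt ℝ f a) (hg : AnalyticAt ℝ g a)
    (n : ℕ) : pdx^[n] (f + g) =ᶠ[𝓝 a] pdx^[n] f + pdx^[n] g := by
  induction n with
  | zero => rfl
  | succ n ih =>
    simp only [Function.iterate_succ_apply']
    exact (ED_pdx_congr ih).trans (ED_lin (ED_pdxn_an hf n) (ED_pdxn_an hg n)).1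

lemma ED_liny {f g : ℝ × ℝ → ℝ} {a : ℝ × ℝ} (hf : AnalyticAt ℝ f a) (hg : AnalyticAt ℝ g a)
    (n : ℕ) : pdy^[n] (f + g) =ᶠ[𝓝 a] pdy^[n] f + pdy^[n] g := by
  induction n with
  | zero => rfl
  | succ n ih =>
    simp only [Function.iterate_succ_apply']
    exact (ED_pdy_congr ih).trans (ED_lin (ED_pdyn_an hf n) (ED_pdyn_an hg n)).2

lemma ED_linxy {f g : ℝ × ℝ → ℝ} {a : ℝ × ℝ} (hf : AnalyticAt ℝ f a) (hg : AnalyticAt ℝ g a)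
    (n k : ℕ) : pdx^[n] (pdy^[k] (f + g)) =ᶠ[𝓝 a] pdx^[n] (pdy^[k] f) + pdx^[n] (pdy^[k] g) :=
  (ED_pdxn_congr (ED_liny hf hg k) n).trans (ED_linx (ED_pdyn_an hf k) (ED_pdyn_an hg k) n)

lemma ED_prodx (f g : ℝ → ℝ) (n : ℕ) :
    pdx^[n] (fun z => f z.1 * g z.2) = fun z => deriv^[n] f z.1 * g z.2 := by
  induction n with
  | zero => rfl
  | succ n ih =>
    simp only [Function.iterate_succ_apply', ih]
    funext z
    simp [pdx]

lemma ED_prody (f g : ℝ → ℝ) (n : ℕ) :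
    pdy^[n] (fun z => f z.1 * g z.2) = fun z => f z.1 * deriv^[n] g z.2 := by
  induction n with
  | zero => rfl
  | succ n ih =>
    simp only [Function.iterate_succ_apply', ih]
    funext z
    simp [pdy]

/-- monomial -/
def EDmon (c : ℝ) (p q : ℕ) : ℝ × ℝ → ℝ := fun z => (c * z.1 ^ p) * z.2 ^ q

lemma EDmon_an (c : ℝ) (p q : ℕ) (a : ℝ × ℝ) : AnalyticAt ℝ (EDmon c p q) a := by
  exact ((analyticAt_const.mul (analyticAt_fst.pow p))).mul (analyticAt_snd.pow q)

lemma EDmon_d (c : ℝ) (p q i j : ℕ) : pdx^[i] (pdy^[j] (EDmon c p q)) = fun z =>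
    (c * (p.descFactorial i * z.1 ^ (p - i))) * (q.descFactorial j * z.2 ^ (q - j)) := by
  unfold EDmon
  rw [ED_prody (fun x => c * x ^ p) (fun y => y ^ q), ED_prodx (fun x => c * x ^ p)]
  funext z
  have h1 : deriv^[i] (fun x : ℝ => c * x ^ p) = fun x => c * deriv^[i] (fun x : ℝ => x ^ p) x := by
    induction i with
    | zero => rfl
    | succ n ih =>
      simp only [Function.iterate_succ_apply', ih]
      funext z
      simp
  rw [h1]
  simp only [← iteratedDeriv_eq_iterate, iteratedDeriv_pow]

lemma EDsum_an (a : ℕ × ℕ → ℝ) (S : Finset (ℕ × ℕ)) (z : ℝ × ℝ) :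
    AnalyticAt ℝ (∑ pq ∈ S, EDmon (a pq) pq.1 pq.2) z :=
  Finset.analyticAt_sum _ fun _ _ => EDmon_an _ _ _ _

lemma EDsum_d (a : ℕ × ℕ → ℝ) (S : Finset (ℕ × ℕ)) (i j : ℕ) (w : ℝ × ℝ) :
    pdx^[i] (pdy^[j] (∑ pq ∈ S, EDmon (a pq) pq.1 pq.2)) =ᶠ[𝓝 w]
      fun z => ∑ pq ∈ S, (a pq * (pq.1.descFactorial i * z.1 ^ (pq.1 - i))) *
        (pq.2.descFactorial j * z.2 ^ (pq.2 - j)) := by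
  classical
  induction S using Finset.induction_on with
  | empty =>
    have h0 : (∑ pq ∈ (∅ : Finset (ℕ × ℕ)), EDmon (a pq) pq.1 pq.2) = EDmon 0 0 0 := by
      funext z; simp [EDmon]
    rw [h0, EDmon_d]
    exact Eventually.of_forall fun z => by simp
  | insert s S hs ih =>
    rw [Finset.sum_insert hs]
    refine (ED_linxy (EDmon_an _ _ _ _) (EDsum_an _ _ _) i j).trans ?_
    rw [EDmon_d]
    filter_upwards [ih] with z hz
    rw [Pi.add_apply, hz, Finset.sum_insert hs]

lemma ED_expand {P : ℝ × ℝ → ℝ} (hP : AnalyticAt ℝ P (0, 0)) (n α β : ℕ)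
    (S : Finset (ℕ × ℕ)) (hS : ∀ p q : ℕ, p + q < n + α + β → (p, q) ∈ S) :
    (fun z : ℝ × ℝ => (pdx^[α] (pdy^[β] P)) z -
      ∑ pq ∈ S, (taylorCoef P pq.1 pq.2 * (pq.1.descFactorial α * z.1 ^ (pq.1 - α))) *
        (pq.2.descFactorial β * z.2 ^ (pq.2 - β))) =O[𝓝 (0, 0)] fun z => ‖z‖ ^ n := by
  set R : ℝ × ℝ → ℝ := P + ∑ pq ∈ S, EDmon (-taylorCoef P pq.1 pq.2) pq.1 pq.2 with hR
  have hRan : AnalyticAt ℝ R (0, 0) :=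
    hP.add (EDsum_an (fun pq => -taylorCoef P pq.1 pq.2) S _)
  have hd : ∀ i j, pdx^[i] (pdy^[j] R) =ᶠ[𝓝 (0, 0)] fun z => (pdx^[i] (pdy^[j] P)) z -
      ∑ pq ∈ S, (taylorCoef P pq.1 pq.2 * (pq.1.descFactorial i * z.1 ^ (pq.1 - i))) *
        (pq.2.descFactorial j * z.2 ^ (pq.2 - j)) := by
    intro i j
    filter_upwards [ED_linxy hP (EDsum_an (fun pq => -taylorCoef P pq.1 pq.2) S _) i j,
      EDsum_d (fun pq => -taylorCoef P pq.1 pq.2) S i j (0, 0)] with z h1 h2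
    rw [hR, h1, Pi.add_apply, h2, sub_eq_add_neg, ← Finset.sum_neg_distrib]
    congr 1
    exact Finset.sum_congr rfl fun _ _ => by ring
  have hvan : EDvan (n + α + β) R := by
    intro i j hij
    rw [(hd i j).eq_of_nhds]
    rw [Finset.sum_eq_single_of_mem (i, j) (hS i j hij)]
    · simp only [Nat.descFactorial_self, Nat.sub_self, pow_zero, taylorCoef]
      have := Nat.factorial_ne_zero i
      have := Nat.factorial_ne_zero j
      field_simp
      ring
    · rintro ⟨p, q⟩ _ hne
      simp only
      rcases lt_trichotomy p i with h | h | h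
      · simp [Nat.descFactorial_eq_zero_iff_lt.2 h]
      · rcases lt_trichotomy q j with h' | h' | h'
        · simp [Nat.descFactorial_eq_zero_iff_lt.2 h']
        · exact absurd (by rw [h, h']) hne
        · simp [zero_pow (Nat.sub_ne_zero_of_lt h')]
      · simp [zero_pow (Nat.sub_ne_zero_of_lt h)]
  exact (EDvan_O (ED_pdxn_an (ED_pdyn_an hRan β) α)
    (EDvan_xn (ED_pdyn_an hRan β) (EDvan_yn hvan))).congr' (hd α β) EventuallyEq.rfl

/-- filter describing the region in coordinates `(x, r)`, `y = r x^m` -/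
def EDl (b B : ℝ) : Filter (ℝ × ℝ) := 𝓝[>] (0:ℝ) ×ˢ 𝓟 (Set.Icc b B)

lemma EDl_ev (b B : ℝ) : ∀ᶠ u in EDl b B, 0 < u.1 ∧ u.1 < 1 ∧ b ≤ u.2 ∧ u.2 ≤ B := by
  have h1 : ∀ᶠ x : ℝ in 𝓝[>] 0, 0 < x ∧ x < 1 :=
    Ioo_mem_nhdsGT one_pos
  have h2 : ∀ᶠ r : ℝ in 𝓟 (Set.Icc b B), r ∈ Set.Icc b B := mem_principal_self _
  filter_upwards [h1.prod_mk h2] with u hu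
  exact ⟨hu.1.1, hu.1.2, hu.2.1, hu.2.2⟩

lemma EDl_ext {b B : ℝ} {p : ℝ × ℝ → Prop} (h : ∀ᶠ u in EDl b B, p u) :
    ∃ ε > (0:ℝ), ∀ x r, 0 < x → x < ε → b ≤ r → r ≤ B → p (x, r) := by
  unfold EDl at h
  rw [eventually_prod_principal_iff] at h
  obtain ⟨ε, hε, hh⟩ := (mem_nhdsGT_iff_exists_Ioo_subset).1 h
  exact ⟨ε, hε, fun x r h1 h2 h3 h4 => hh ⟨h1, h2⟩ r ⟨h3, h4⟩⟩

lemma EDl_fst (b B : ℝ) : Tendsto Prod.fst (EDl b B) (𝓝[>] (0:ℝ)) := tendsto_fst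

lemma EDl_pow_tendsto (b B : ℝ) {s : ℝ} (hs : 0 < s) :
    Tendsto (fun u : ℝ × ℝ => u.1 ^ s) (EDl b B) (𝓝 0) := by
  have := (Real.continuousAt_rpow_const 0 s (Or.inr hs.le)).tendsto
  rw [Real.zero_rpow hs.ne'] at this
  exact (this.mono_left nhdsWithin_le_nhds).comp (EDl_fst b B)

lemma EDl_pow_O (b B : ℝ) {s t : ℝ} (hs : s ≤ t) :
    (fun u : ℝ × ℝ => u.1 ^ t) =O[EDl b B] fun u => u.1 ^ s := by
  refine IsBigO.of_bound 1 ?_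
  filter_upwards [EDl_ev b B] with u ⟨h0, h1, _⟩
  rw [Real.norm_of_nonneg (by positivity), Real.norm_of_nonneg (by positivity), one_mul]
  exact Real.rpow_le_rpow_of_exponent_ge h0 h1.le hs

lemma EDl_pow_o (b B : ℝ) {s t : ℝ} (hs : s < t) :
    (fun u : ℝ × ℝ => u.1 ^ t) =o[EDl b B] fun u => u.1 ^ s := by
  have h1 : (fun u : ℝ × ℝ => u.1 ^ (t - s)) =o[EDl b B] fun _ => (1:ℝ) :=
    (isLittleO_one_iff ℝ).2 (EDl_pow_tendsto b B (sub_pos.2 hs))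
  have h2 := h1.mul_isBigO (isBigO_refl (fun u : ℝ × ℝ => u.1 ^ s) (EDl b B))
  refine h2.congr' ?_ (Eventually.of_forall fun u => one_mul _)
  filter_upwards [EDl_ev b B] with u ⟨h0, _⟩
  rw [← Real.rpow_add h0]; congr 1; ring

lemma EDl_r {b : ℝ} (hb : 0 < b) (B t : ℝ) :
    (fun u : ℝ × ℝ => u.2 ^ t) =O[EDl b B] fun _ => (1:ℝ) := by
  have hc : ContinuousOn (fun r : ℝ => r ^ t) (Set.Icc b B) := fun r hr =>
    (Real.continuousAt_rpow_const r t (Or.inl (hb.trans_le hr.1).ne')).continuousWithinAt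
  obtain ⟨C, hC⟩ := isCompact_Icc.exists_bound_of_continuousOn hc
  refine IsBigO.of_bound C ?_
  filter_upwards [EDl_ev b B] with u hu
  simpa using hC u.2 ⟨hu.2.2.1, hu.2.2.2⟩

/-- the change of coordinates -/
def EDphi (m : ℝ) (u : ℝ × ℝ) : ℝ × ℝ := (u.1, u.2 * u.1 ^ m)

lemma EDphi_tendsto {b m : ℝ} (hb : 0 < b) (B : ℝ) (hm : 0 < m) :
    Tendsto (EDphi m) (EDl b B) (𝓝 (0, 0)) := by
  refine Tendsto.prodMk_nhds ((EDl_fst b B).mono_right nhdsWithin_le_nhds) ?_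
  have h := (EDl_r hb B 1).mul_isLittleO ((isLittleO_one_iff ℝ).2 (EDl_pow_tendsto b B hm))
  simp only [Real.rpow_one, mul_one] at h
  exact (isLittleO_one_iff ℝ).1 h

lemma EDphi_norm {b m : ℝ} (hb : 0 < b) (B : ℝ) (n : ℕ) :
    (fun u => ‖EDphi m u‖ ^ n) =O[EDl b B] fun u => u.1 ^ (min 1 m * n) := by
  have h1 : (fun u : ℝ × ℝ => u.1) =O[EDl b B] fun u => u.1 ^ (min 1 m) := by
    simpa using EDl_pow_O b B (min_le_left 1 m)
  have h2 : (fun u : ℝ × ℝ => u.2 * u.1 ^ m) =O[EDl b B] fun u => u.1 ^ (min 1 m) := by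
    simpa using (EDl_r hb B 1).mul (EDl_pow_O b B (min_le_right 1 m))
  have h3 : (fun u => ‖EDphi m u‖) =O[EDl b B] fun u => u.1 ^ (min 1 m) :=
    (h1.prod_left h2).norm_left
  refine (h3.pow n).congr' EventuallyEq.rfl ?_
  filter_upwards [EDl_ev b B] with u hu
  rw [Real.rpow_mul hu.1.le, Real.rpow_natCast]

lemma ED_desc {x : ℝ} (hx : 0 < x) (p α : ℕ) :
    (p.descFactorial α : ℝ) * x ^ (p - α) = p.descFactorial α * x ^ ((p:ℝ) - α) := by
  rcases lt_or_ge p α with h | h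
  · simp [Nat.descFactorial_eq_zero_iff_lt.2 h]
  · rw [← Nat.cast_sub h, Real.rpow_natCast]

lemma ED_mono {x r m : ℝ} (hx : 0 < x) (hr : 0 < r) (s t : ℝ) :
    x ^ s * (r * x ^ m) ^ t = r ^ t * x ^ (s + m * t) := by
  rw [Real.mul_rpow hr.le (by positivity), ← Real.rpow_mul hx.le, Real.rpow_add hx]; ring

lemma ED_term {b m : ℝ} (hb : 0 < b) (B c : ℝ) (p q α β : ℕ) :
    (fun u => (c * (p.descFactorial α * (EDphi m u).1 ^ (p - α))) *
      (q.descFactorial β * (EDphi m u).2 ^ (q - β))) =O[EDl b B]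
      fun u => u.1 ^ ((p:ℝ) + m * q - α - m * β) := by
  have h := ((EDl_r hb B ((q:ℝ) - β)).mul
    (isBigO_refl (fun u : ℝ × ℝ => u.1 ^ ((p:ℝ) + m * q - α - m * β)) (EDl b B))).const_mul_left
    (c * p.descFactorial α * q.descFactorial β)
  simp only [one_mul] at h
  refine h.congr' ?_ EventuallyEq.rfl
  filter_upwards [EDl_ev b B] with u hu
  have h0 := hu.1
  have hr : 0 < u.2 := hb.trans_le hu.2.2.1
  simp only [EDphi]
  rw [ED_desc hu.1, ED_desc (by positivity)]
  have := ED_mono (m := m) h0 hr ((p:ℝ) - α) ((q:ℝ) - β)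
  rw [show (p:ℝ) + m * q - α - m * β = (p:ℝ) - α + m * (q - β) by ring]
  linear_combination (-(c * p.descFactorial α * q.descFactorial β)) * this

/-- On a 'good' region associated to a compact edge of the
Newton polyhedron avoiding the roots of the edge polynomial, `P` is dominated
by the edge part `P_E`, which behaves like the monomial `x^{p_l} y^{q_l}`. -/
theorem edge_dominance
    (P : ℝ × ℝ → ℝ) (hP : AnalyticAt ℝ P (0, 0))
    (hPnz : ∀ ε > (0 : ℝ), ∃ p : ℝ × ℝ, ‖p‖ < ε ∧ P p ≠ 0)
    (m : ℚ) (hm : 0 < m) (e : ℝ)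
    (he₁ : ∃ p q : ℕ, taylorCoef P p q ≠ 0 ∧ (p : ℝ) + (m : ℝ) * q = e)
    (he₂ : ∀ p q : ℕ, taylorCoef P p q ≠ 0 → e ≤ (p : ℝ) + (m : ℝ) * q)
    (E : Finset (ℕ × ℕ))
    (hE : ∀ pq : ℕ × ℕ, pq ∈ E ↔
      taylorCoef P pq.1 pq.2 ≠ 0 ∧ (pq.1 : ℝ) + (m : ℝ) * pq.2 = e)
    (pl ql : ℕ) (hpl : (pl, ql) ∈ E) (hql : ∀ pq ∈ E, pq.2 ≤ ql)
    (b B : ℝ) (hb : 0 < b) (hbB : b < B)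
    (hroot : ∀ r ∈ Set.Icc b B, ∑ pq ∈ E, taylorCoef P pq.1 pq.2 * r ^ pq.2 ≠ 0)
    (N L : ℕ) :
    ∃ ε > (0 : ℝ), ∃ c C : ℝ, 0 < c ∧ c ≤ C ∧
      ∀ x y : ℝ, 0 < x → x < ε → b * x ^ ((m : ℝ)) ≤ y → y ≤ B * x ^ ((m : ℝ)) →
        (c * x ^ pl * y ^ ql ≤
            |∑ pq ∈ E, taylorCoef P pq.1 pq.2 * x ^ pq.1 * y ^ pq.2| ∧
          |∑ pq ∈ E, taylorCoef P pq.1 pq.2 * x ^ pq.1 * y ^ pq.2| ≤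
            C * x ^ pl * y ^ ql) ∧
        |P (x, y) - ∑ pq ∈ E, taylorCoef P pq.1 pq.2 * x ^ pq.1 * y ^ pq.2| ≤
          (1 / 2 : ℝ) ^ N *
            |∑ pq ∈ E, taylorCoef P pq.1 pq.2 * x ^ pq.1 * y ^ pq.2| ∧
        (∀ α β : ℕ, α ≤ L → β ≤ L →
          |(pdx^[α] (pdy^[β] P)) (x, y)| ≤
            C * min 1 (x ^ ((pl : ℝ) - α) * y ^ ((ql : ℝ) - β))) := by
  have hm' : (0:ℝ) < (m:ℝ) := by exact_mod_cast hm
  set M : ℝ := (m : ℝ) with hM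
  set l := EDl b B with hl
  have hμ : 0 < min 1 M := lt_min one_pos hm'
  obtain ⟨n, hn⟩ := exists_nat_ge ((e + 1) / min 1 M)
  have hn' : e + 1 ≤ min 1 M * n := by
    rw [div_le_iff₀ hμ] at hn; linarith
  set K := n + L + L with hK
  classical
  set S : Finset (ℕ × ℕ) := (Finset.range K ×ˢ Finset.range K) ∪ E with hS
  have hSmem : ∀ α β, α ≤ L → β ≤ L → ∀ p q : ℕ, p + q < n + α + β → (p, q) ∈ S := by
    intro α β hα hβ p q hpq
    simp only [hS, Finset.mem_union, Finset.mem_product, Finset.mem_range]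
    left; constructor <;> omega
  have hrem : ∀ α β, α ≤ L → β ≤ L →
      (fun u => (pdx^[α] (pdy^[β] P)) (EDphi M u) -
      ∑ pq ∈ S, (taylorCoef P pq.1 pq.2 * (pq.1.descFactorial α * (EDphi M u).1 ^ (pq.1 - α))) *
        (pq.2.descFactorial β * (EDphi M u).2 ^ (pq.2 - β))) =O[l] fun u => u.1 ^ (e + 1) := by
    intro α β hα hβ
    have h1 := (ED_expand hP n α β S (hSmem α β hα hβ)).comp_tendsto (EDphi_tendsto hb B hm')
    exact (h1.trans (EDphi_norm hb B n)).trans (EDl_pow_O b B hn')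
  -- part (ii)
  have hii : (fun u => P (EDphi M u) -
      ∑ pq ∈ E, taylorCoef P pq.1 pq.2 * (EDphi M u).1 ^ pq.1 * (EDphi M u).2 ^ pq.2)
      =o[l] fun u => u.1 ^ e := by
    have h1 := (hrem 0 0 (Nat.zero_le _) (Nat.zero_le _)).trans_isLittleO
      (EDl_pow_o b B (lt_add_one e))
    have h2 : (fun u => ∑ pq ∈ S \ E, (taylorCoef P pq.1 pq.2 *
        (pq.1.descFactorial 0 * (EDphi M u).1 ^ (pq.1 - 0))) *
        (pq.2.descFactorial 0 * (EDphi M u).2 ^ (pq.2 - 0))) =o[l] fun u => u.1 ^ e := by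
      refine IsLittleO.fun_sum fun pq hpq => ?_
      by_cases hc : taylorCoef P pq.1 pq.2 = 0
      · simp [hc]
      · refine (ED_term hb B _ pq.1 pq.2 0 0).trans_isLittleO (EDl_pow_o b B ?_)
        have hne : (pq.1:ℝ) + M * pq.2 ≠ e := fun h =>
          (Finset.mem_sdiff.1 hpq).2 ((hE pq).2 ⟨hc, h⟩)
        have := lt_of_le_of_ne (he₂ _ _ hc) hne.symm
        simpa using this
    refine (h1.add h2).congr_left fun u => ?_
    have hES : E ⊆ S := Finset.subset_union_right
    rw [← Finset.sum_sdiff hES]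
    simp only [Nat.descFactorial_zero, Nat.cast_one, one_mul, Nat.sub_zero, Function.iterate_zero, id]
    ring
  -- part (iii)
  have hiii : ∀ α β, α ≤ L → β ≤ L → (fun u => (pdx^[α] (pdy^[β] P)) (EDphi M u)) =O[l]
      fun u => u.1 ^ (e - α - M * β) := by
    intro α β hα hβ
    have hab : (0:ℝ) ≤ α + M * β := by positivity
    have h1 := (hrem α β hα hβ).trans (EDl_pow_O b B (show e - α - M * β ≤ e + 1 by linarith))
    have h2 : (fun u => ∑ pq ∈ S, (taylorCoef P pq.1 pq.2 *
        (pq.1.descFactorial α * (EDphi M u).1 ^ (pq.1 - α))) *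
        (pq.2.descFactorial β * (EDphi M u).2 ^ (pq.2 - β))) =O[l]
        fun u => u.1 ^ (e - α - M * β) := by
      refine IsBigO.fun_sum fun pq hpq => ?_
      by_cases hc : taylorCoef P pq.1 pq.2 = 0
      · simp only [hc, zero_mul]; exact isBigO_zero _ _
      · refine (ED_term hb B _ pq.1 pq.2 α β).trans (EDl_pow_O b B ?_)
        have := he₂ _ _ hc
        linarith
    exact (h1.add h2).congr_left fun u => by ring
  have hple : (pl:ℝ) + M * ql = e := ((hE _).1 hpl).2
  have hiii2 : ∀ α β, α ≤ L → β ≤ L → (fun u => (pdx^[α] (pdy^[β] P)) (EDphi M u)) =O[l]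
      fun u => (EDphi M u).1 ^ ((pl:ℝ) - α) * (EDphi M u).2 ^ ((ql:ℝ) - β) := by
    intro α β hα hβ
    refine (hiii α β hα hβ).trans ?_
    have h := (EDl_r hb B (-((ql:ℝ) - β))).mul (isBigO_refl (fun u =>
      (EDphi M u).1 ^ ((pl:ℝ) - α) * (EDphi M u).2 ^ ((ql:ℝ) - β)) l)
    simp only [one_mul] at h
    refine h.congr' ?_ EventuallyEq.rfl
    filter_upwards [EDl_ev b B] with u hu
    have hr : 0 < u.2 := hb.trans_le hu.2.2.1
    simp only [EDphi]
    rw [ED_mono hu.1 hr, ← mul_assoc, ← Real.rpow_add hr, neg_add_cancel, Real.rpow_zero, one_mul]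
    congr 1
    rw [← hple]; ring
  have hiii1 : ∀ α β, (fun u => (pdx^[α] (pdy^[β] P)) (EDphi M u)) =O[l] fun _ => (1:ℝ) :=
    fun α β => ((ED_pdxn_an (ED_pdyn_an hP β) α).continuousAt.tendsto.comp
      (EDphi_tendsto hb B hm')).isBigO_one ℝ
  have hC1 : ∀ α β, ∃ C, α ≤ L → β ≤ L → ∀ᶠ u in l, |(pdx^[α] (pdy^[β] P)) (EDphi M u)| ≤ C ∧
      |(pdx^[α] (pdy^[β] P)) (EDphi M u)| ≤
        C * ‖(EDphi M u).1 ^ ((pl:ℝ) - α) * (EDphi M u).2 ^ ((ql:ℝ) - β)‖ := by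
    intro α β
    by_cases h : α ≤ L ∧ β ≤ L
    · obtain ⟨C1, h1⟩ := (hiii1 α β).bound
      obtain ⟨C2, h2⟩ := (hiii2 α β h.1 h.2).bound
      refine ⟨max C1 C2, fun _ _ => ?_⟩
      filter_upwards [h1, h2] with u h1 h2
      constructor
      · rw [norm_one, mul_one] at h1
        exact h1.trans (le_max_left _ _)
      · exact h2.trans (mul_le_mul_of_nonneg_right (le_max_right _ _) (norm_nonneg _))
    · exact ⟨0, fun h1 h2 => absurd ⟨h1, h2⟩ h⟩
  choose C hC using hC1
  set T := Finset.range (L + 1) ×ˢ Finset.range (L + 1) with hT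
  have hCall : ∀ᶠ u in l, ∀ ab ∈ T, |(pdx^[ab.1] (pdy^[ab.2] P)) (EDphi M u)| ≤ C ab.1 ab.2 ∧
      |(pdx^[ab.1] (pdy^[ab.2] P)) (EDphi M u)| ≤
        C ab.1 ab.2 * ‖(EDphi M u).1 ^ ((pl:ℝ) - ab.1) * (EDphi M u).2 ^ ((ql:ℝ) - ab.2)‖ := by
    rw [Filter.eventually_all_finset]
    intro ab hab
    simp only [hT, Finset.mem_product, Finset.mem_range] at hab
    exact hC _ _ (by omega) (by omega)
  set C0 := ∑ ab ∈ T, |C ab.1 ab.2| with hC0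
  have hCle : ∀ ab ∈ T, C ab.1 ab.2 ≤ C0 := fun ab hab =>
    (le_abs_self _).trans (Finset.single_le_sum (f := fun ab : ℕ × ℕ => |C ab.1 ab.2|)
      (fun _ _ => abs_nonneg _) hab)
  -- part (i)
  set g : ℝ → ℝ := fun r => ∑ pq ∈ E, taylorCoef P pq.1 pq.2 * r ^ pq.2 with hg
  have hgc : Continuous g := by
    rw [hg]; fun_prop
  obtain ⟨r0, hr0, hmin⟩ := isCompact_Icc.exists_isMinOn (Set.nonempty_Icc.2 hbB.le)
    hgc.abs.continuousOn
  obtain ⟨C3, hC3⟩ := isCompact_Icc.exists_bound_of_continuousOn (hgc.continuousOn (s := Set.Icc b B))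
  set c0 := |g r0| with hc0
  have hc0pos : 0 < c0 := abs_pos.2 (hroot r0 hr0)
  have hC3pos : c0 ≤ C3 := hC3 r0 hr0
  obtain ⟨ε, hε, hall⟩ := EDl_ext (hCall.and (hii.bound (show 0 < (1/2:ℝ)^N * c0 by positivity)))
  have hB : 0 < B := hb.trans hbB
  refine ⟨ε, hε, c0 / B ^ ql, max C0 (C3 / b ^ ql), by positivity, ?_, ?_⟩
  · refine le_trans ?_ (le_max_right _ _)
    gcongr
    exact hc0pos.le.trans hC3pos
  intro x y hx hxε hy1 hy2
  have hxm : 0 < x ^ M := by positivity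
  obtain ⟨r, hr⟩ : ∃ r, y = r * x ^ M := ⟨y / x ^ M, by field_simp⟩
  have hbr : b ≤ r := by rw [hr] at hy1; exact le_of_mul_le_mul_right hy1 hxm
  have hrB : r ≤ B := by rw [hr] at hy2; exact le_of_mul_le_mul_right hy2 hxm
  have hrpos : 0 < r := hb.trans_le hbr
  have hypos : 0 < y := by rw [hr]; positivity
  obtain ⟨ha1, ha2⟩ := hall x r hx hxε hbr hrB
  have hφ : EDphi M (x, r) = (x, y) := by simp [EDphi, hr]
  rw [hφ] at ha2
  simp only [hφ] at ha1
  have hmono : ∀ p q : ℕ, (p:ℝ) + M * q = e → x ^ p * y ^ q = r ^ q * x ^ e := by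
    intro p q h
    have := ED_mono (m := M) hx hrpos p q
    simp only [Real.rpow_natCast] at this
    rw [hr, this, h]
  have hPE : ∑ pq ∈ E, taylorCoef P pq.1 pq.2 * x ^ pq.1 * y ^ pq.2 = g r * x ^ e := by
    rw [hg, Finset.sum_mul]
    refine Finset.sum_congr rfl fun pq hpq => ?_
    rw [mul_assoc, hmono _ _ ((hE pq).1 hpq).2, mul_assoc]
  have hxe : 0 < x ^ e := by positivity
  have hgr1 : c0 ≤ |g r| := hmin ⟨hbr, hrB⟩
  have hgr2 : |g r| ≤ C3 := hC3 r ⟨hbr, hrB⟩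
  simp only [hPE] at ha2 ⊢
  rw [abs_mul, abs_of_pos hxe]
  refine ⟨⟨?_, ?_⟩, ?_, ?_⟩
  · rw [mul_assoc, hmono _ _ hple, ← mul_assoc]
    gcongr
    refine le_trans ?_ hgr1
    rw [div_mul_eq_mul_div, div_le_iff₀ (by positivity)]
    gcongr
  · rw [mul_assoc, hmono _ _ hple, ← mul_assoc]
    gcongr
    refine hgr2.trans ?_
    have : C3 / b ^ ql * b ^ ql ≤ max C0 (C3 / b ^ ql) * r ^ ql := by
      have h3 : 0 ≤ C3 := hc0pos.le.trans hC3pos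
      gcongr
      · exact le_max_right _ _
    rwa [div_mul_cancel₀ _ (by positivity)] at this
  · rw [Real.norm_eq_abs, Real.norm_eq_abs, abs_of_pos hxe] at ha2
    refine ha2.trans ?_
    rw [mul_assoc]
    gcongr
  · intro α β hα hβ
    have hT' : (α, β) ∈ T := by
      simp only [hT, Finset.mem_product, Finset.mem_range]; omega
    obtain ⟨d1, d2⟩ := ha1 _ hT'
    have hle : C α β ≤ max C0 (C3 / b ^ ql) := (hCle _ hT').trans (le_max_left _ _)
    rw [Real.norm_of_nonneg (by positivity)] at d2
    rcases min_choice (1:ℝ) (x ^ ((pl : ℝ) - α) * y ^ ((ql : ℝ) - β)) with h | h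
    · rw [h, mul_one]; exact d1.trans hle
    · rw [h]; exact d2.trans (mul_le_mul_of_nonneg_right hle (by positivity))
end
end

section
/- Let P : ℝ² → ℝ be real analytic in a neighborhood of the origin, with Taylor coefficients c_{p,q} := ∂_x^p ∂_y^q P(0,0)/(p! q!). Let (p_v, q_v) ∈ ℕ² with c_{p_v,q_v} ≠ 0, and let 0 ≤ m_l < m_r ≤ ∞ be such that for every (p,q) ∈ ℕ² with (p,q) ≠ (p_v,q_v) and c_{p,q} ≠ 0, and every real m with m_l < m < m_r, one has p + m q > p_v + m q_v. Then for every N, L ∈ ℕ there exist constants c_l > 0 and C_r > 0 and ε > 0 and C > 0 such that for all (x,y) with 0 < x < ε satisfying C_r x^{m_r} < y < c_l x^{m_l} (where the lower constraint is replaced by 0 < y in case m_r = ∞, and the upper constraint is replaced by y < ε in case m_l = 0): (i) |P(x,y) − c_{p_v,q_v} x^{p_v} y^{q_v}| ≤ 2^{−N} |c_{p_v,q_v} x^{p_v} y^{q_v}|; (ii) |∂_x^α ∂_y^β P(x,y)| ≤ C · min{ 1, x^{p_v − α} y^{q_v − β} } for all integers 0 ≤ α, β ≤ L (real powers of the positive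 numbers x, y, so negative exponents are allowed). -/
open MeasureTheory

noncomputable section

def Region (ml : ℝ) (mr : WithTop ℝ) (δ x y : ℝ) : Prop :=
  0 < x ∧ x < δ ∧ (mr = ⊤ → 0 < y) ∧
  (∀ m : ℝ, mr = (m : WithTop ℝ) → δ⁻¹ * x ^ m < y) ∧
  (ml = 0 → y < δ) ∧ (ml ≠ 0 → y < δ * x ^ ml)

lemma Region.pos {ml : ℝ} {mr : WithTop ℝ} {δ x y : ℝ} (h : Region ml mr δ x y) : 0 < y := by
  obtain ⟨hx, hxd, h1, h2, -, -⟩ := h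
  induction mr using WithTop.recTopCoe with
  | top => exact h1 rfl
  | coe m =>
    have hd : 0 < δ := hx.trans hxd
    exact lt_of_le_of_lt (by positivity) (h2 m rfl)

lemma Region.lt {ml : ℝ} {mr : WithTop ℝ} {δ x y : ℝ} (hml : 0 ≤ ml) (hδ : δ ≤ 1)
    (h : Region ml mr δ x y) : y < δ := by
  obtain ⟨hx, hxd, -, -, h1, h2⟩ := h
  by_cases h0 : ml = 0
  · exact h1 h0
  · have := Real.rpow_le_one hx.le (hxd.le.trans hδ) hml
    have hd : 0 < δ := hx.trans hxd
    nlinarith [h2 h0]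

lemma key_exp {ml : ℝ} {mr : WithTop ℝ} (hml : 0 ≤ ml) (hmlr : (ml : WithTop ℝ) < mr)
    (pv qv : ℕ) : ∃ K : ℕ, pv + qv ≤ K ∧ ∀ δ x y : ℝ, δ ≤ 1 → Region ml mr δ x y →
      ∀ p q : ℕ, (p, q) ≠ (pv, qv) →
      (∀ m : ℝ, ml < m → (m : WithTop ℝ) < mr → (pv : ℝ) + m * qv < (p : ℝ) + m * q) →
      ∃ e : ℕ, 1 ≤ e ∧ p + q ≤ e + K ∧ x ^ p * y ^ q ≤ δ ^ e * (x ^ pv * y ^ qv) := by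
  refine ⟨pv + qv + ⌈(mr.untopD 0) * qv⌉₊, by omega, ?_⟩
  intro δ x y hδ1 hR p q hne hv
  have hy := hR.pos
  have hyd := hR.lt hml hδ1
  obtain ⟨hx, hxd, h1, h2, h3, h4⟩ := hR
  have hd : 0 < δ := hx.trans hxd
  -- an intermediate exponent
  obtain ⟨m0, hm0, hm0r⟩ : ∃ m0 : ℝ, ml < m0 ∧ (m0 : WithTop ℝ) < mr := by
    induction mr using WithTop.recTopCoe with
    | top => exact ⟨ml + 1, by linarith, WithTop.coe_lt_top _⟩
    | coe m =>
      have : ml < m := by exact_mod_cast hmlr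
      exact ⟨(ml + m) / 2, by linarith, by exact_mod_cast (by linarith : (ml + m) / 2 < m)⟩
  have hl : (pv : ℝ) + ml * qv ≤ p + ml * q := by
    by_contra! hcon
    -- affine function positive on (ml, m0]
    have hcont : Filter.Tendsto (fun m : ℝ => (p : ℝ) + m * q - (pv + m * qv))
        (nhdsWithin ml (Set.Ioi ml)) (nhds ((p : ℝ) + ml * q - (pv + ml * qv))) := by
      apply Filter.Tendsto.mono_left _ nhdsWithin_le_nhds
      apply Continuous.tendsto
      fun_prop
    have := ge_of_tendsto hcont (b := 0) (by
      filter_upwards [Ioo_mem_nhdsGT hm0] with m hm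
      have := hv m hm.1 (lt_trans (by exact_mod_cast hm.2) hm0r)
      linarith)
    linarith
  rcases lt_trichotomy q qv with hq | hq | hq
  · -- q < qv
    obtain ⟨u, rfl⟩ := Nat.exists_eq_add_of_lt hq
    induction mr using WithTop.recTopCoe with
    | top =>
      exfalso
      have := hv (max (ml + 1) p) (lt_of_lt_of_le (by linarith) (le_max_left _ _)) (WithTop.coe_lt_top _)
      have h5 : (p : ℝ) ≤ max (ml + 1) p := le_max_right _ _
      push_cast at this
      have : (0:ℝ) ≤ max (ml + 1) p * u := by positivity
      have : (0:ℝ) ≤ pv := by positivity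
      nlinarith
    | coe m =>
      have hmm : ml < m := by exact_mod_cast hmlr
      have hr : (pv : ℝ) + m * (q + u + 1 : ℕ) ≤ p + m * q := by
        have hcont : Filter.Tendsto (fun m : ℝ => (p : ℝ) + m * q - (pv + m * (q + u + 1 : ℕ)))
            (nhdsWithin m (Set.Iio m)) (nhds ((p : ℝ) + m * q - (pv + m * (q + u + 1 : ℕ)))) := by
          apply Filter.Tendsto.mono_left _ nhdsWithin_le_nhds
          apply Continuous.tendsto
          fun_prop
        have := ge_of_tendsto hcont (b := 0) (by
          filter_upwards [Ioo_mem_nhdsLT hmm] with m hm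
          have := hv m hm.1 (by exact_mod_cast hm.2)
          linarith)
        linarith
      push_cast at hr
      have hm0' : 0 ≤ m := hml.trans hmm.le
      have hppv : pv ≤ p := by
        have : (0:ℝ) ≤ m * (u + 1) := by positivity
        have : (pv : ℝ) ≤ p := by nlinarith
        exact_mod_cast this
      obtain ⟨w, rfl⟩ := Nat.exists_eq_add_of_le hppv
      push_cast at hr
      have hw : m * ((u + 1 : ℕ) : ℝ) ≤ w := by push_cast; nlinarith
      have hxm : x ^ m < δ * y := by
        have := h2 m rfl
        rwa [inv_mul_lt_iff₀ hd] at this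
      have hceil : ⌈m * ((u + 1 : ℕ) : ℝ)⌉₊ ≤ ⌈m * ((q + u + 1 : ℕ) : ℝ)⌉₊ := by
        apply Nat.ceil_mono
        apply mul_le_mul_of_nonneg_left _ hm0'
        exact_mod_cast (by omega)
      have hceil2 : m * ((u + 1 : ℕ) : ℝ) ≤ ⌈m * ((u + 1 : ℕ) : ℝ)⌉₊ := Nat.le_ceil _
      have hceil3 : ⌈m * ((u + 1 : ℕ) : ℝ)⌉₊ ≤ w := by
        exact Nat.ceil_le.2 hw
      obtain ⟨k, hk⟩ := Nat.exists_eq_add_of_le hceil3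
      refine ⟨u + 1 + k, by omega, ?_, ?_⟩
      · simp only [WithTop.untopD_coe]
        omega
      · have e1 : x ^ w ≤ x ^ k * (x ^ m) ^ (u + 1) := by
          rw [← Real.rpow_natCast (x ^ m), ← Real.rpow_mul hx.le, ← Real.rpow_natCast x k,
            ← Real.rpow_add hx, ← Real.rpow_natCast x w]
          apply Real.rpow_le_rpow_of_exponent_ge hx (hxd.le.trans hδ1)
          rw [hk]
          push_cast at hceil2 ⊢
          linarith
        have e2 : (x ^ m) ^ (u + 1) ≤ (δ * y) ^ (u + 1) := by
          gcongr
        have e3 : x ^ k ≤ δ ^ k := by gcongr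
        calc x ^ (pv + w) * y ^ q = x ^ w * (x ^ pv * y ^ q) := by ring
          _ ≤ (δ ^ k * (δ * y) ^ (u + 1)) * (x ^ pv * y ^ q) := by
            gcongr
            exact e1.trans (by gcongr)
          _ = _ := by ring
  · -- q = qv
    subst hq
    have hpp : pv < p := by
      have := hv m0 hm0 hm0r
      have : (pv : ℝ) < p := by linarith
      exact_mod_cast this
    obtain ⟨w, rfl⟩ := Nat.exists_eq_add_of_lt hpp
    refine ⟨w + 1, by omega, by omega, ?_⟩
    calc x ^ (pv + w + 1) * y ^ q = x ^ (w + 1) * (x ^ pv * y ^ q) := by ring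
      _ ≤ _ := by gcongr
  · -- qv < q
    obtain ⟨u, rfl⟩ := Nat.exists_eq_add_of_lt hq
    by_cases hp : pv ≤ p
    · obtain ⟨w, rfl⟩ := Nat.exists_eq_add_of_le hp
      refine ⟨w + (u + 1), by omega, by omega, ?_⟩
      calc x ^ (pv + w) * y ^ (qv + u + 1) = x ^ w * y ^ (u + 1) * (x ^ pv * y ^ qv) := by ring
        _ ≤ δ ^ w * δ ^ (u + 1) * (x ^ pv * y ^ qv) := by gcongr
        _ = _ := by ring
    · push Not at hp
      obtain ⟨w, rfl⟩ := Nat.exists_eq_add_of_lt hp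
      push_cast at hl
      have h0 : ml ≠ 0 := by
        rintro rfl
        have : (0:ℝ) ≤ w := by positivity
        linarith
      have hyl := h4 h0
      refine ⟨u + 1, by omega, by omega, ?_⟩
      have e1 : (x ^ ml) ^ (u + 1) ≤ x ^ (w + 1) := by
        rw [← Real.rpow_natCast (x ^ ml), ← Real.rpow_mul hx.le, ← Real.rpow_natCast x]
        apply Real.rpow_le_rpow_of_exponent_ge hx (hxd.le.trans hδ1)
        push_cast
        linarith
      calc x ^ p * y ^ (qv + u + 1) = y ^ (u + 1) * (x ^ p * y ^ qv) := by ring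
        _ ≤ (δ * x ^ ml) ^ (u + 1) * (x ^ p * y ^ qv) := by gcongr
        _ = δ ^ (u + 1) * (x ^ ml) ^ (u + 1) * (x ^ p * y ^ qv) := by ring
        _ ≤ δ ^ (u + 1) * x ^ (w + 1) * (x ^ p * y ^ qv) := by gcongr
        _ = _ := by ring

lemma key_est {ml : ℝ} {mr : WithTop ℝ} (hml : 0 ≤ ml) (hmlr : (ml : WithTop ℝ) < mr)
    (pv qv : ℕ) (ρ : ℝ) (hρ : 0 < ρ) (hρ1 : ρ ≤ 1) : ∃ M : ℝ, 0 < M ∧ ∀ δ x y : ℝ, δ ≤ ρ →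
      Region ml mr δ x y →
      ∀ p q : ℕ, 
      ((p, q) ≠ (pv, qv) → ∀ m : ℝ, ml < m → (m : WithTop ℝ) < mr →
        (pv : ℝ) + m * qv < (p : ℝ) + m * q) →
      x ^ p * y ^ q ≤ M * ρ ^ (p + q) * (x ^ pv * y ^ qv) ∧
      ((p, q) ≠ (pv, qv) → x ^ p * y ^ q ≤ M * δ * ρ ^ (p + q) * (x ^ pv * y ^ qv)) := by
  obtain ⟨K, hK, H⟩ := key_exp hml hmlr pv qv
  refine ⟨(ρ ^ (K + 1))⁻¹, by positivity, ?_⟩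
  intro δ x y hδ hR p q hv
  have hy := hR.pos
  have hx := hR.1
  have hd : 0 < δ := hx.trans hR.2.1
  have B : (p, q) ≠ (pv, qv) →
      x ^ p * y ^ q ≤ (ρ ^ (K + 1))⁻¹ * δ * ρ ^ (p + q) * (x ^ pv * y ^ qv) := by
    intro hne
    obtain ⟨e, he, hpq, hle⟩ := H δ x y (hδ.trans hρ1) hR p q hne (hv hne)
    refine hle.trans ?_
    gcongr
    obtain ⟨f, rfl⟩ := Nat.exists_eq_add_of_le he
    have h1 : δ ^ f ≤ ρ ^ f := by gcongr
    have h2 : ρ ^ (K + 1 + f) ≤ ρ ^ (p + q) := pow_le_pow_of_le_one hρ.le hρ1 (by omega)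
    rw [mul_assoc, inv_mul_eq_div, le_div_iff₀ (by positivity)]
    calc δ ^ (1 + f) * ρ ^ (K + 1) = δ * (δ ^ f * ρ ^ (K + 1)) := by ring
      _ ≤ δ * (ρ ^ f * ρ ^ (K + 1)) := by gcongr
      _ = δ * ρ ^ (K + 1 + f) := by ring
      _ ≤ _ := by gcongr
  refine ⟨?_, B⟩
  by_cases hne : (p, q) = (pv, qv)
  · simp only [Prod.mk.injEq] at hne
    obtain ⟨rfl, rfl⟩ := hne
    apply le_mul_of_one_le_left (by positivity)
    rw [inv_mul_eq_div, one_le_div (by positivity)]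
    exact pow_le_pow_of_le_one hρ.le hρ1 (by omega)
  · refine (B hne).trans ?_
    gcongr
    apply mul_le_of_le_one_right (by positivity) (hδ.trans hρ1)

lemma oneD {f : ℝ → ℝ} {b : ℕ → ℝ} {ρ : ℝ} (hρ : 0 < ρ)
    (h : ∀ t, |t| < ρ → HasSum (fun n => b n * t ^ n) (f t)) (n : ℕ) :
    iteratedDeriv n f 0 = n.factorial * b n := by
  have h1 : HasFPowerSeriesAt f (FormalMultilinearSeries.ofScalars ℝ b) 0 := by
    rw [hasFPowerSeriesAt_iff]
    filter_upwards [Metric.ball_mem_nhds (0:ℝ) hρ] with t ht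
    have : |t| < ρ := by simpa using ht
    simpa [FormalMultilinearSeries.coeff_ofScalars, mul_comm] using h t this
  have h2 := h1.analyticAt.hasFPowerSeriesAt
  have h3 := h1.eq_formalMultilinearSeries h2
  have h4 := congrArg (fun s => FormalMultilinearSeries.coeff s n) h3
  simp only [FormalMultilinearSeries.coeff_ofScalars] at h4
  rw [h4]
  field_simp

lemma iter_pdx (g : ℝ × ℝ → ℝ) (n : ℕ) (x y : ℝ) :
    (pdx^[n] g) (x, y) = iteratedDeriv n (fun t => g (t, y)) x := by
  induction n generalizing x with
  | zero => simp
  | succ n ih =>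
    rw [Function.iterate_succ_apply', iteratedDeriv_succ]
    simp only [pdx, ih]

lemma iter_pdy (g : ℝ × ℝ → ℝ) (n : ℕ) (x y : ℝ) :
    (pdy^[n] g) (x, y) = iteratedDeriv n (fun t => g (x, t)) y := by
  induction n generalizing y with
  | zero => simp
  | succ n ih =>
    rw [Function.iterate_succ_apply', iteratedDeriv_succ]
    simp only [pdy, ih]

lemma exists_series {Q : ℝ × ℝ → ℝ} (hQ : AnalyticAt ℝ Q (0, 0)) :
    ∃ (a : ℕ × ℕ → ℝ) (ρ : ℝ), 0 < ρ ∧ ρ ≤ 1 ∧ Summable (fun z : ℕ × ℕ => |a z| * ρ ^ (z.1 + z.2)) ∧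
      ∀ x y : ℝ, |x| ≤ ρ → |y| ≤ ρ → HasSum (fun z : ℕ × ℕ => a z * (x ^ z.1 * y ^ z.2)) (Q (x, y)) := by
  obtain ⟨s, R, hs⟩ := hQ
  obtain ⟨r, hr0, hrR⟩ := ENNReal.lt_iff_exists_nnreal_btwn.1 hs.r_pos
  have hr0' : 0 < r := by exact_mod_cast hr0
  have hr0r : (0:ℝ) < r := by exact_mod_cast hr0
  obtain ⟨C, hC, hbd⟩ := s.norm_le_div_pow_of_pos_of_lt_radius hr0' (hrR.trans_le hs.r_le)
  let e1 : ℝ × ℝ := (1, 0)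
  let e2 : ℝ × ℝ := (0, 1)
  let A : ℕ → ℕ → ℝ := fun n j => ∑ S ∈ Finset.powersetCard j (Finset.univ : Finset (Fin n)),
    s n (S.piecewise (fun _ => e1) (fun _ => e2))
  have hA : ∀ n j, |A n j| ≤ C * (2 / r) ^ n := by
    intro n j
    have h1 : ∀ S ∈ Finset.powersetCard j (Finset.univ : Finset (Fin n)),
        ‖s n (S.piecewise (fun _ => e1) (fun _ => e2))‖ ≤ C / r ^ n := by
      intro S _
      refine ((s n).le_opNorm _).trans ?_
      refine le_trans (mul_le_of_le_one_right (norm_nonneg _) ?_) (hbd n)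
      apply Finset.prod_le_one
      · intros; positivity
      · intro i _
        by_cases hi : i ∈ S <;> simp [hi, e1, e2, Prod.norm_def]
    rw [← Real.norm_eq_abs]
    refine (norm_sum_le_of_le _ h1).trans ?_
    rw [Finset.sum_const, nsmul_eq_mul, Finset.card_powersetCard, Finset.card_univ, Fintype.card_fin]
    have : (n.choose j : ℝ) ≤ 2 ^ n := by exact_mod_cast Nat.choose_le_two_pow n j
    rw [div_pow]
    calc (n.choose j : ℝ) * (C / r ^ n) ≤ 2 ^ n * (C / r ^ n) := by gcongr
      _ = _ := by ring
  have hexp : ∀ (x y : ℝ) (n : ℕ), s n (fun _ => (x, y)) =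
      ∑ z ∈ Finset.HasAntidiagonal.antidiagonal n, A (z.1 + z.2) z.1 * (x ^ z.1 * y ^ z.2) := by
    intro x y n
    have h0 : (fun _ : Fin n => ((x, y) : ℝ × ℝ)) = (fun _ => x • e1) + (fun _ => y • e2) := by
      ext i <;> simp [e1, e2]
    rw [h0, ContinuousMultilinearMap.map_add_univ]
    have h1 : ∀ S : Finset (Fin n), s n (S.piecewise (fun _ => x • e1) (fun _ => y • e2)) =
        s n (S.piecewise (fun _ => e1) (fun _ => e2)) * (x ^ S.card * y ^ (n - S.card)) := by
      intro S
      have : S.piecewise (fun _ => x • e1) (fun _ => y • e2) =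
          fun i => (S.piecewise (fun _ => x) (fun _ => y) i) •
            (S.piecewise (fun _ => e1) (fun _ => e2) : Fin n → ℝ × ℝ) i := by
        funext i
        by_cases hi : i ∈ S <;> simp [hi]
      rw [this, ContinuousMultilinearMap.map_smul_univ, smul_eq_mul, mul_comm]
      congr 1
      rw [Finset.prod_piecewise]
      simp [Finset.card_sdiff]
    simp_rw [h1]
    rw [← Finset.powerset_univ, Finset.sum_powerset, Finset.Nat.sum_antidiagonal_eq_sum_range_succ_mk]
    simp only [Finset.card_univ, Fintype.card_fin]
    apply Finset.sum_congr rfl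
    intro j hj
    have hj' : j + (n - j) = n := by have := Finset.mem_range.1 hj; omega
    simp only [hj', A, Finset.sum_mul]
    apply Finset.sum_congr rfl
    intro S hS
    rw [(Finset.mem_powersetCard.1 hS).2]
  have hsum0 : ∀ ρ : ℝ, 0 ≤ ρ → ρ ≤ r / 4 →
      Summable (fun z : ℕ × ℕ => |A (z.1 + z.2) z.1| * ρ ^ (z.1 + z.2)) := by
    intro ρ h0 h4
    have hg : Summable (fun n : ℕ => (1/2 : ℝ) ^ n) := summable_geometric_two
    have := (hg.mul_of_nonneg hg (fun _ => by positivity) (fun _ => by positivity)).mul_left C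
    refine Summable.of_nonneg_of_le (fun _ => by positivity) ?_ this
    rintro ⟨j, k⟩
    calc |A (j + k) j| * ρ ^ (j + k) ≤ C * (2 / r) ^ (j + k) * (r / 4) ^ (j + k) := by
          gcongr
          exact hA _ _
      _ = C * ((2 / r) * (r / 4)) ^ (j + k) := by rw [mul_pow]; ring
      _ = C * (1 / 2) ^ (j + k) := by congr 2; field_simp; norm_num
      _ = _ := by rw [pow_add]
  refine ⟨fun z => A (z.1 + z.2) z.1, min 1 (r / 4), by positivity, min_le_left _ _,
    hsum0 _ (by positivity) (min_le_right _ _), ?_⟩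
  intro x y hx hy
  set ρ := min 1 ((r : ℝ) / 4) with hρ
  have hρ0 : 0 < ρ := by positivity
  have hS : Summable (fun z : ℕ × ℕ => A (z.1 + z.2) z.1 * (x ^ z.1 * y ^ z.2)) := by
    refine Summable.of_norm_bounded (hsum0 ρ hρ0.le (min_le_right _ _)) ?_
    rintro ⟨j, k⟩
    simp only [norm_mul, norm_pow, Real.norm_eq_abs, pow_add]
    gcongr
  have hmem : ((x, y) : ℝ × ℝ) ∈ Metric.eball (0 : ℝ × ℝ) R := by
    refine Metric.eball_subset_eball hrR.le ?_
    rw [Metric.eball_coe, mem_ball_zero_iff, Prod.norm_def]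
    have : ρ ≤ r / 4 := min_le_right _ _
    simp only [Real.norm_eq_abs]
    exact max_lt (by linarith) (by linarith)
  have h1 := hs.hasSum hmem
  have h2 : HasSum (fun n => ∑ z ∈ Finset.HasAntidiagonal.antidiagonal n,
      A (z.1 + z.2) z.1 * (x ^ z.1 * y ^ z.2)) (Q (x, y)) := by
    simp only [hexp] at h1
    simpa using h1
  have h3 := hS.hasSum
  have h4 := (Finset.HasAntidiagonal.sigmaAntidiagonalEquivProd (A := ℕ)).hasSum_iff.2 h3
  have h5 := h4.sigma (fun n => hasSum_fintype _)
  have h6 : HasSum (fun n => ∑ z ∈ Finset.HasAntidiagonal.antidiagonal n,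
      A (z.1 + z.2) z.1 * (x ^ z.1 * y ^ z.2)) (∑' z : ℕ × ℕ, A (z.1 + z.2) z.1 * (x ^ z.1 * y ^ z.2)) := by
    convert h5 using 2 with n
    exact (Finset.sum_coe_sort (Finset.HasAntidiagonal.antidiagonal n) 
      (fun z : ℕ × ℕ => A (z.1 + z.2) z.1 * (x ^ z.1 * y ^ z.2))).symm
  rw [h2.unique h6]
  exact h3

lemma taylor_series {Q : ℝ × ℝ → ℝ} (hQ : AnalyticAt ℝ Q (0, 0)) :
    ∃ ρ : ℝ, 0 < ρ ∧ ρ ≤ 1 ∧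
      Summable (fun z : ℕ × ℕ => |taylorCoef Q z.1 z.2| * ρ ^ (z.1 + z.2)) ∧
      ∀ x y : ℝ, |x| ≤ ρ → |y| ≤ ρ →
        HasSum (fun z : ℕ × ℕ => taylorCoef Q z.1 z.2 * (x ^ z.1 * y ^ z.2)) (Q (x, y)) := by
  obtain ⟨a, ρ, hρ, hρ1, hs, hsum⟩ := exists_series hQ
  have hsx : ∀ x q, |x| ≤ ρ → Summable (fun j => a (j, q) * x ^ j) := by
    intro x q hx
    have h1 := hs.prod_symm.prod_factor q
    have h2 := h1.mul_right ((ρ ^ q)⁻¹)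
    refine Summable.of_norm_bounded h2 ?_
    intro j
    simp only [norm_mul, norm_pow, Real.norm_eq_abs, pow_add, Prod.swap]
    have : |a (j, q)| * (ρ ^ j * ρ ^ q) * (ρ ^ q)⁻¹ = |a (j, q)| * ρ ^ j := by field_simp
    rw [this]
    gcongr
  have hb : ∀ x q, |x| < ρ → (pdy^[q] Q) (x, 0) = q.factorial * ∑' j, a (j, q) * x ^ j := by
    intro x q hx
    rw [iter_pdy]
    refine oneD hρ (b := fun q => ∑' j, a (j, q) * x ^ j) ?_ q
    intro t ht
    have h1 := (Equiv.prodComm ℕ ℕ).hasSum_iff.2 (hsum x t hx.le ht.le)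
    refine h1.prod_fiberwise ?_
    intro k
    have := (hsx x k hx.le).hasSum.mul_right (t ^ k)
    simpa [mul_assoc] using this
  have hc : ∀ p q, taylorCoef Q p q = a (p, q) := by
    intro p q
    have : (pdx^[p] (pdy^[q] Q)) (0, 0) = p.factorial * (q.factorial * a (p, q)) := by
      rw [iter_pdx]
      refine oneD hρ (b := fun p => q.factorial * a (p, q)) ?_ p
      intro t ht
      rw [hb t q ht]
      have := (hsx t q ht.le).hasSum.mul_left (q.factorial : ℝ)
      simpa [mul_assoc] using this
    rw [taylorCoef, this]
    field_simp
  simp only [hc]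
  exact ⟨ρ, hρ, hρ1, hs, hsum⟩

lemma pdx_congr {z : ℝ × ℝ} {f g : ℝ × ℝ → ℝ} (h : f =ᶠ[nhds z] g) : pdx f =ᶠ[nhds z] pdx g := by
  filter_upwards [h.eventuallyEq_nhds] with w hw
  apply Filter.EventuallyEq.deriv_eq
  have : Filter.Tendsto (fun t : ℝ => (t, w.2)) (nhds w.1) (nhds w) :=
    Continuous.tendsto (by fun_prop) w.1
  exact this.eventually hw

lemma pdy_congr {z : ℝ × ℝ} {f g : ℝ × ℝ → ℝ} (h : f =ᶠ[nhds z] g) : pdy f =ᶠ[nhds z] pdy g := by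
  filter_upwards [h.eventuallyEq_nhds] with w hw
  apply Filter.EventuallyEq.deriv_eq
  have : Filter.Tendsto (fun t : ℝ => (w.1, t)) (nhds w.2) (nhds w) :=
    Continuous.tendsto (by fun_prop) w.2
  exact this.eventually hw

lemma pdx_eq {z : ℝ × ℝ} {f : ℝ × ℝ → ℝ} (h : DifferentiableAt ℝ f z) :
    pdx f z = fderiv ℝ f z (1, 0) := by
  have h1 : HasDerivAt (fun t : ℝ => (t, z.2)) ((1 : ℝ), (0 : ℝ)) z.1 :=
    (hasDerivAt_id z.1).prodMk (hasDerivAt_const _ _)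
  exact (HasFDerivAt.comp_hasDerivAt (f := fun t : ℝ => (t, z.2)) z.1 h.hasFDerivAt h1).deriv

lemma pdy_eq {z : ℝ × ℝ} {f : ℝ × ℝ → ℝ} (h : DifferentiableAt ℝ f z) :
    pdy f z = fderiv ℝ f z (0, 1) := by
  have h1 : HasDerivAt (fun t : ℝ => (z.1, t)) ((0 : ℝ), (1 : ℝ)) z.2 :=
    (hasDerivAt_const _ _).prodMk (hasDerivAt_id z.2)
  exact (HasFDerivAt.comp_hasDerivAt (f := fun t : ℝ => (z.1, t)) z.2 h.hasFDerivAt h1).deriv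

lemma pdx_ev {z : ℝ × ℝ} {f : ℝ × ℝ → ℝ} (h : AnalyticAt ℝ f z) :
    pdx f =ᶠ[nhds z] fun w => fderiv ℝ f w (1, 0) := by
  filter_upwards [h.eventually_analyticAt] with w hw
  exact pdx_eq hw.differentiableAt

lemma pdy_ev {z : ℝ × ℝ} {f : ℝ × ℝ → ℝ} (h : AnalyticAt ℝ f z) :
    pdy f =ᶠ[nhds z] fun w => fderiv ℝ f w (0, 1) := by
  filter_upwards [h.eventually_analyticAt] with w hw
  exact pdy_eq hw.differentiableAt

lemma fd_an {z : ℝ × ℝ} {f : ℝ × ℝ → ℝ} (h : AnalyticAt ℝ f z) (v : ℝ × ℝ) :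
    AnalyticAt ℝ (fun w => fderiv ℝ f w v) z :=
  ((ContinuousLinearMap.apply ℝ ℝ v).analyticAt _).comp h.fderiv

lemma pdx_an {z : ℝ × ℝ} {f : ℝ × ℝ → ℝ} (h : AnalyticAt ℝ f z) : AnalyticAt ℝ (pdx f) z :=
  (fd_an h _).congr (pdx_ev h).symm

lemma pdy_an {z : ℝ × ℝ} {f : ℝ × ℝ → ℝ} (h : AnalyticAt ℝ f z) : AnalyticAt ℝ (pdy f) z :=
  (fd_an h _).congr (pdy_ev h).symm

lemma pd_comm_at {z : ℝ × ℝ} {f : ℝ × ℝ → ℝ} (h : AnalyticAt ℝ f z) :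
    pdy (pdx f) z = pdx (pdy f) z := by
  have h2 : ∀ v w : ℝ × ℝ, fderiv ℝ (fun w => fderiv ℝ f w v) z w = fderiv ℝ (fderiv ℝ f) z w v := by
    intro v w
    have := h.fderiv.differentiableAt
    rw [fderiv_clm_apply this (by fun_prop)]
    simp
  rw [pdy_eq (pdx_an h).differentiableAt, pdx_eq (pdy_an h).differentiableAt,
    (pdx_ev h).fderiv_eq, (pdy_ev h).fderiv_eq, h2, h2]
  exact (h.contDiffAt (n := 2)).isSymmSndFDerivAt (by simp) _ _

lemma pd_comm {z : ℝ × ℝ} {f : ℝ × ℝ → ℝ} (h : AnalyticAt ℝ f z) :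
    pdy (pdx f) =ᶠ[nhds z] pdx (pdy f) := by
  filter_upwards [h.eventually_analyticAt] with w hw
  exact pd_comm_at hw

lemma pdx_iter_an {z : ℝ × ℝ} {f : ℝ × ℝ → ℝ} (h : AnalyticAt ℝ f z) (n : ℕ) :
    AnalyticAt ℝ (pdx^[n] f) z := by
  induction n with
  | zero => exact h
  | succ n ih => rw [Function.iterate_succ_apply']; exact pdx_an ih

lemma pdy_iter_an {z : ℝ × ℝ} {f : ℝ × ℝ → ℝ} (h : AnalyticAt ℝ f z) (n : ℕ) :
    AnalyticAt ℝ (pdy^[n] f) z := by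
  induction n with
  | zero => exact h
  | succ n ih => rw [Function.iterate_succ_apply']; exact pdy_an ih

lemma pdx_iter_congr {z : ℝ × ℝ} {f g : ℝ × ℝ → ℝ} (h : f =ᶠ[nhds z] g) (n : ℕ) :
    pdx^[n] f =ᶠ[nhds z] pdx^[n] g := by
  induction n with
  | zero => exact h
  | succ n ih => rw [Function.iterate_succ_apply', Function.iterate_succ_apply']; exact pdx_congr ih

lemma pd_comm1 {z : ℝ × ℝ} {f : ℝ × ℝ → ℝ} (h : AnalyticAt ℝ f z) (n : ℕ) :
    pdy (pdx^[n] f) =ᶠ[nhds z] pdx^[n] (pdy f) := by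
  induction n with
  | zero => rfl
  | succ n ih =>
    rw [Function.iterate_succ_apply', Function.iterate_succ_apply']
    exact (pd_comm (pdx_iter_an h n)).trans (pdx_congr ih)

lemma pd_comm2 {z : ℝ × ℝ} {f : ℝ × ℝ → ℝ} (h : AnalyticAt ℝ f z) (n k : ℕ) :
    pdy^[k] (pdx^[n] f) =ᶠ[nhds z] pdx^[n] (pdy^[k] f) := by
  induction k with
  | zero => rfl
  | succ k ih =>
    rw [Function.iterate_succ_apply', Function.iterate_succ_apply']
    exact (pdy_congr ih).trans (pd_comm1 (pdy_iter_an h k) n)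

lemma coef_shift {P : ℝ × ℝ → ℝ} (h : AnalyticAt ℝ P (0, 0)) (α β p q : ℕ)
    (hne : taylorCoef (pdx^[α] (pdy^[β] P)) p q ≠ 0) : taylorCoef P (p + α) (q + β) ≠ 0 := by
  have h1 := pdx_iter_congr (pd_comm2 (pdy_iter_an h β) α q) p
  have h2 := h1.eq_of_nhds
  rw [← Function.iterate_add_apply, ← Function.iterate_add_apply] at h2
  simp only [taylorCoef] at hne ⊢
  rw [h2] at hne
  have h3 := (div_ne_zero_iff.1 hne).1
  exact div_ne_zero h3 (by positivity)

lemma est_i (P : ℝ × ℝ → ℝ) (hP : AnalyticAt ℝ P (0, 0))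
    (pv qv : ℕ) (hc : taylorCoef P pv qv ≠ 0)
    (ml : ℝ) (mr : WithTop ℝ) (hml : 0 ≤ ml) (hmlr : (ml : WithTop ℝ) < mr)
    (hvertex : ∀ p q : ℕ, (p, q) ≠ (pv, qv) → taylorCoef P p q ≠ 0 →
      ∀ m : ℝ, ml < m → (m : WithTop ℝ) < mr →
        (pv : ℝ) + m * qv < (p : ℝ) + m * q) (N : ℕ) :
    ∃ δ₀ : ℝ, 0 < δ₀ ∧ ∀ δ ≤ δ₀, ∀ x y, Region ml mr δ x y →
      |P (x, y) - taylorCoef P pv qv * x ^ pv * y ^ qv| ≤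
          (1 / 2 : ℝ) ^ N * |taylorCoef P pv qv * x ^ pv * y ^ qv| := by
  obtain ⟨ρ, hρ, hρ1, hs, hsum⟩ := taylor_series hP
  obtain ⟨M, hM, hkey⟩ := key_est hml hmlr pv qv ρ hρ hρ1
  set S := ∑' z : ℕ × ℕ, |taylorCoef P z.1 z.2| * ρ ^ (z.1 + z.2) with hS
  have hS0 : 0 ≤ S := tsum_nonneg (fun _ => by positivity)
  have hc' : 0 < |taylorCoef P pv qv| := abs_pos.2 hc
  refine ⟨min ρ ((1 / 2 : ℝ) ^ N * |taylorCoef P pv qv| / (M * (S + 1))), by positivity, ?_⟩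
  intro δ hδ x y hR
  have hδρ := hδ.trans (min_le_left _ _)
  have hδ2 := hδ.trans (min_le_right _ _)
  have hx := hR.1
  have hy := hR.pos
  have hd : 0 < δ := hx.trans hR.2.1
  have hxρ : |x| ≤ ρ := by rw [abs_of_pos hx]; linarith [hR.2.1]
  have hyρ : |y| ≤ ρ := by rw [abs_of_pos hy]; linarith [hR.lt hml (hδρ.trans hρ1)]
  have h1 := hsum x y hxρ hyρ
  have h2 := h1.update (pv, qv) 0
  have h3 : 0 - taylorCoef P pv qv * (x ^ pv * y ^ qv) + P (x, y) =
    P (x, y) - taylorCoef P pv qv * x ^ pv * y ^ qv := by ring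
  simp only [h3] at h2
  have h4 := hs.hasSum.mul_right (M * δ * (x ^ pv * y ^ qv))
  rw [← hS] at h4
  have h5 : |P (x, y) - taylorCoef P pv qv * x ^ pv * y ^ qv| ≤ S * (M * δ * (x ^ pv * y ^ qv)) := by
    rw [← h2.tsum_eq, ← Real.norm_eq_abs]
    refine tsum_of_norm_bounded h4 ?_
    rintro ⟨p, q⟩
    by_cases hz : (p, q) = (pv, qv)
    · rw [hz]
      simp only [Function.update_self, norm_zero]
      positivity
    · rw [Function.update_of_ne hz]
      simp only [norm_mul, norm_pow, Real.norm_eq_abs, abs_of_pos hx, abs_of_pos hy]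
      by_cases h0 : taylorCoef P p q = 0
      · simp [h0]
      · have := (hkey δ x y hδρ hR p q (fun hne => hvertex p q hne h0)).2 hz
        calc |taylorCoef P p q| * (x ^ p * y ^ q) 
            ≤ |taylorCoef P p q| * (M * δ * ρ ^ (p + q) * (x ^ pv * y ^ qv)) := by gcongr
          _ = _ := by ring
  refine h5.trans ?_
  rw [abs_mul, abs_mul, abs_of_pos (pow_pos hx pv), abs_of_pos (pow_pos hy qv)]
  rw [le_div_iff₀ (by positivity)] at hδ2
  have h6 : S * (M * δ) ≤ (1 / 2 : ℝ) ^ N * |taylorCoef P pv qv| := by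
    refine le_trans ?_ hδ2
    nlinarith [mul_pos hM hd]
  calc S * (M * δ * (x ^ pv * y ^ qv)) = S * (M * δ) * (x ^ pv * y ^ qv) := by ring
    _ ≤ (1 / 2 : ℝ) ^ N * |taylorCoef P pv qv| * (x ^ pv * y ^ qv) := by gcongr
    _ = _ := by ring

lemma est_ii (P : ℝ × ℝ → ℝ) (hP : AnalyticAt ℝ P (0, 0))
    (pv qv : ℕ) 
    (ml : ℝ) (mr : WithTop ℝ) (hml : 0 ≤ ml) (hmlr : (ml : WithTop ℝ) < mr)
    (hvertex : ∀ p q : ℕ, (p, q) ≠ (pv, qv) → taylorCoef P p q ≠ 0 →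
      ∀ m : ℝ, ml < m → (m : WithTop ℝ) < mr →
        (pv : ℝ) + m * qv < (p : ℝ) + m * q) (α β : ℕ) :
    ∃ δ₀ C : ℝ, 0 < δ₀ ∧ ∀ δ ≤ δ₀, ∀ x y, Region ml mr δ x y →
      |(pdx^[α] (pdy^[β] P)) (x, y)| ≤
            C * min 1 (x ^ ((pv : ℝ) - α) * y ^ ((qv : ℝ) - β)) := by
  have hQ : AnalyticAt ℝ (pdx^[α] (pdy^[β] P)) (0, 0) := pdx_iter_an (pdy_iter_an hP β) α
  have hsh := coef_shift hP α β
  generalize pdx^[α] (pdy^[β] P) = Q at hQ hsh ⊢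
  obtain ⟨ρ, hρ, hρ1, hs, hsum⟩ := taylor_series hQ
  obtain ⟨M, hM, hkey⟩ := key_est hml hmlr pv qv ρ hρ hρ1
  set S := ∑' z : ℕ × ℕ, |taylorCoef Q z.1 z.2| * ρ ^ (z.1 + z.2) with hS
  have hS0 : 0 ≤ S := tsum_nonneg (fun _ => by positivity)
  refine ⟨ρ, S * (M + 1), hρ, ?_⟩
  intro δ hδρ x y hR
  have hx := hR.1
  have hy := hR.pos
  have hxρ : |x| ≤ ρ := by rw [abs_of_pos hx]; linarith [hR.2.1]
  have hyρ : |y| ≤ ρ := by rw [abs_of_pos hy]; linarith [hR.lt hml (hδρ.trans hρ1)]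
  have h1 := hsum x y hxρ hyρ
  have hA : |Q (x, y)| ≤ S := by
    rw [← h1.tsum_eq, ← Real.norm_eq_abs]
    refine tsum_of_norm_bounded hs.hasSum ?_
    rintro ⟨p, q⟩
    simp only [norm_mul, norm_pow, Real.norm_eq_abs, pow_add]
    gcongr
  have hB : |Q (x, y) * (x ^ α * y ^ β)| ≤ S * (M * (x ^ pv * y ^ qv)) := by
    have h2 := h1.mul_right (x ^ α * y ^ β)
    rw [← h2.tsum_eq, ← Real.norm_eq_abs]
    refine tsum_of_norm_bounded (hs.hasSum.mul_right _) ?_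
    rintro ⟨p, q⟩
    simp only [norm_mul, norm_pow, Real.norm_eq_abs, abs_of_pos hx, abs_of_pos hy]
    by_cases h0 : taylorCoef Q p q = 0
    · simp [h0]
    · have := (hkey δ x y hδρ hR (p + α) (q + β)
        (fun hne => hvertex _ _ hne (hsh p q h0))).1
      have h3 : ρ ^ (p + α + (q + β)) ≤ ρ ^ (p + q) := pow_le_pow_of_le_one hρ.le hρ1 (by omega)
      calc |taylorCoef Q p q| * (x ^ p * y ^ q) * (x ^ α * y ^ β)
          = |taylorCoef Q p q| * (x ^ (p + α) * y ^ (q + β)) := by ring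
        _ ≤ |taylorCoef Q p q| * (M * ρ ^ (p + α + (q + β)) * (x ^ pv * y ^ qv)) := by gcongr
        _ ≤ |taylorCoef Q p q| * (M * ρ ^ (p + q) * (x ^ pv * y ^ qv)) := by gcongr
        _ = _ := by ring
  rw [mul_min_of_nonneg _ _ (by positivity)]
  apply le_min
  · nlinarith
  · rw [Real.rpow_sub hx, Real.rpow_sub hy]
    simp only [Real.rpow_natCast]
    rw [abs_mul, abs_of_pos (by positivity : 0 < x ^ α * y ^ β)] at hB
    rw [← mul_div_mul_comm, ← mul_div_assoc, le_div_iff₀ (by positivity)]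
    refine hB.trans ?_
    have : 0 ≤ S * (x ^ pv * y ^ qv) := by positivity
    nlinarith

/-- On the 'good' region associated to a vertex `(p_v, q_v)` of
the Newton polyhedron, the single monomial `c_{p_v,q_v} x^{p_v} y^{q_v}`
dominates `P`.  The adjacent edges have slopes `−1/m_l` and `−1/m_r`, with
`m_r` possibly infinite. -/
theorem vertex_dominance
    (P : ℝ × ℝ → ℝ) (hP : AnalyticAt ℝ P (0, 0))
    (pv qv : ℕ) (hc : taylorCoef P pv qv ≠ 0)
    (ml : ℝ) (mr : WithTop ℝ) (hml : 0 ≤ ml) (hmlr : (ml : WithTop ℝ) < mr)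
    (hvertex : ∀ p q : ℕ, (p, q) ≠ (pv, qv) → taylorCoef P p q ≠ 0 →
      ∀ m : ℝ, ml < m → (m : WithTop ℝ) < mr →
        (pv : ℝ) + m * qv < (p : ℝ) + m * q)
    (N L : ℕ) :
    ∃ cl Cr ε C : ℝ, 0 < cl ∧ 0 < Cr ∧ 0 < ε ∧ 0 < C ∧
      ∀ x y : ℝ, 0 < x → x < ε →
        (mr = ⊤ → 0 < y) →
        (∀ m : ℝ, mr = (m : WithTop ℝ) → Cr * x ^ m < y) →
        (ml = 0 → y < ε) →
        (ml ≠ 0 → y < cl * x ^ ml) →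
        |P (x, y) - taylorCoef P pv qv * x ^ pv * y ^ qv| ≤
          (1 / 2 : ℝ) ^ N * |taylorCoef P pv qv * x ^ pv * y ^ qv| ∧
        (∀ α β : ℕ, α ≤ L → β ≤ L →
          |(pdx^[α] (pdy^[β] P)) (x, y)| ≤
            C * min 1 (x ^ ((pv : ℝ) - α) * y ^ ((qv : ℝ) - β))) := by
  obtain ⟨δ₀, hδ₀, hi⟩ := est_i P hP pv qv hc ml mr hml hmlr hvertex N
  choose d C hd hii using est_ii P hP pv qv ml mr hml hmlr hvertex
  let I : Finset (ℕ × ℕ) := Finset.range (L + 1) ×ˢ Finset.range (L + 1)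
  have hI : I.Nonempty := ⟨(0, 0), by simp [I]⟩
  let d' := I.inf' hI (fun z => d z.1 z.2)
  have hd' : 0 < d' := by
    rw [Finset.lt_inf'_iff]
    exact fun z _ => hd _ _
  let δ := min δ₀ d'
  have hδ : 0 < δ := lt_min hδ₀ hd'
  refine ⟨δ, δ⁻¹, δ, (∑ z ∈ I, |C z.1 z.2|) + 1, hδ, inv_pos.2 hδ, hδ, by positivity, ?_⟩
  intro x y hx hxd h1 h2 h3 h4
  have hR : Region ml mr δ x y := ⟨hx, hxd, h1, h2, h3, h4⟩
  have hy := hR.pos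
  refine ⟨hi δ (min_le_left _ _) x y hR, ?_⟩
  intro α β hα hβ
  have hmem : (α, β) ∈ I := by simp [I]; omega
  have h5 : d' ≤ d α β := Finset.inf'_le (fun z : ℕ × ℕ => d z.1 z.2) hmem
  refine (hii α β δ ((min_le_right _ _).trans h5) x y hR).trans ?_
  have h6 : |C α β| ≤ ∑ z ∈ I, |C z.1 z.2| :=
    Finset.single_le_sum (f := fun z : ℕ × ℕ => |C z.1 z.2|) (fun _ _ => abs_nonneg _) hmem
  gcongr
  linarith [le_abs_self (C α β)]
end
end

section
/- Let m ≥ 1 be a real number and 0 < b < B. Then there exists K ∈ ℕ, depending only on m, b, B, such that for every σ ∈ (0, 1/2] and every closed interval I ⊆ [σ/2, 2σ] of length at most (3σ/2)/K, the convex hull of the set T_I := {(x,y) ∈ ℝ² : x ∈ I, b x^m ≤ y ≤ B x^m} is contained in the set {(x,y) ∈ ℝ² : x ∈ I, (b/2) x^m ≤ y ≤ 2B x^m}. -/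
open MeasureTheory

noncomputable section

/-- Slicing a curved triangular region `b x^m ≤ y ≤ B x^m` over
a dyadic interval into `K` equal pieces makes the convex hull of each slice
stay inside the enlarged curved region `(b/2) x^m ≤ y ≤ 2B x^m`. -/
theorem convexHull_of_slice_subset
    (m : ℝ) (hm : 1 ≤ m) (b B : ℝ) (hb : 0 < b) (hbB : b < B) :
    ∃ K : ℕ, 0 < K ∧
      ∀ σ : ℝ, 0 < σ → σ ≤ 1 / 2 →
        ∀ s t : ℝ, σ / 2 ≤ s → t ≤ 2 * σ → t - s ≤ (3 * σ / 2) / K →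
          convexHull ℝ
              {p : ℝ × ℝ | p.1 ∈ Set.Icc s t ∧
                b * p.1 ^ m ≤ p.2 ∧ p.2 ≤ B * p.1 ^ m} ⊆
            {p : ℝ × ℝ | p.1 ∈ Set.Icc s t ∧
              (b / 2) * p.1 ^ m ≤ p.2 ∧ p.2 ≤ 2 * B * p.1 ^ m} := by
  have hm0 : 0 < m := by linarith
  set r : ℝ := (2 : ℝ) ^ (1 / m) with hr
  have hr1 : 1 < r := Real.one_lt_rpow (by norm_num) (by positivity)
  have hrm : r ^ m = 2 := by
    rw [hr, ← Real.rpow_mul (by norm_num), one_div_mul_cancel hm0.ne', Real.rpow_one]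
  obtain ⟨K, hK⟩ := exists_nat_gt (3 / (r - 1))
  have hr0 : 0 < r - 1 := by linarith
  have hK0 : (0 : ℝ) < K := lt_trans (by positivity) hK
  refine ⟨K, by exact_mod_cast hK0, ?_⟩
  intro σ hσ _ s t hs _ hst
  have hs0 : 0 < s := by linarith
  have hts : t ≤ r * s := by
    have h1 : 3 * σ / 2 / K ≤ (r - 1) * s := by
      rw [div_le_iff₀ hK0]
      rw [div_lt_iff₀ hr0] at hK
      nlinarith
    linarith
  have hB : 0 < B := by linarith
  intro p hp
  have hsub : convexHull ℝ {p : ℝ × ℝ | p.1 ∈ Set.Icc s t ∧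
      b * p.1 ^ m ≤ p.2 ∧ p.2 ≤ B * p.1 ^ m} ⊆
      Set.Icc s t ×ˢ Set.Icc (b * s ^ m) (B * t ^ m) := by
    refine convexHull_min ?_ ((convex_Icc _ _).prod (convex_Icc _ _))
    rintro ⟨x, y⟩ ⟨⟨h1, h2⟩, h3, h4⟩
    dsimp only at h1 h2 h3 h4
    have h5 : s ^ m ≤ x ^ m := Real.rpow_le_rpow hs0.le h1 hm0.le
    have h6 : x ^ m ≤ t ^ m := Real.rpow_le_rpow (hs0.le.trans h1) h2 hm0.le
    exact ⟨⟨h1, h2⟩, (mul_le_mul_of_nonneg_left h5 hb.le).trans h3,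
      h4.trans (mul_le_mul_of_nonneg_left h6 hB.le)⟩
  obtain ⟨⟨h1, h2⟩, h3, h4⟩ := hsub hp
  have h5 : s ^ m ≤ p.1 ^ m := Real.rpow_le_rpow hs0.le h1 hm0.le
  have h6 : p.1 ^ m ≤ t ^ m := Real.rpow_le_rpow (hs0.le.trans h1) h2 hm0.le
  have h7 : t ^ m ≤ 2 * s ^ m := by
    rw [← hrm, ← Real.mul_rpow (by linarith) hs0.le]
    exact Real.rpow_le_rpow (by linarith) hts hm0.le
  refine ⟨⟨h1, h2⟩, ?_, ?_⟩
  · have := mul_le_mul_of_nonneg_left (h6.trans h7) hb.le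
    linarith
  · have := mul_le_mul_of_nonneg_left (h7.trans (by linarith : _ ≤ 2 * p.1 ^ m)) hB.le
    linarith
end
end
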